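/- arXiv:1403.5413 — 2 statements merged into one kernel-verified Lean document; each statement's English description precedes it below -/
import Mathlib

section
/- For all p > 1 and q > 1 with 1/p + 1/q > 1, there exists a constant C_{p,q} > 0, depending only on p and q, such that: for every a < b and all functions f, g : [a;b] → ℝ with no common points of discontinuity, with f of finite p-variation and g of finite q-variation on [a;b], the indefinite Riemann–Stieltjes integral t ↦ ∫_a^t f dg (t ∈ [a;b]) satisfies ‖∫_a^· f dg‖_{q-var,[a;b]} ≤ ( C_{p,q} · ‖f‖_{p-var,[a;b]}^{p − p/q} · ‖f‖_{osc,[a;b]}^{1 + p/q − p} + ‖f‖_{∞,[a;b]} ) · ‖g‖_{q-var,[a;b]}. -/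
open Filter Set

/-- Truncated variation of `f` on `[a;b]` with truncation parameter `δ`. -/
noncomputable def truncVar (f : ℝ → ℝ) (δ a b : ℝ) : ENNReal :=
  ⨆ (n : ℕ) (t : Fin (n + 1) → ℝ) (_ : StrictMono t)
    (_ : ∀ i, t i ∈ Set.Icc a b),
    ∑ i : Fin n, ENNReal.ofReal (|f (t i.succ) - f (t i.castSucc)| - δ)

/-- p-variation of `f` on `[a;b]`. -/
noncomputable def pVar (f : ℝ → ℝ) (p a b : ℝ) : ENNReal :=
  ⨆ (n : ℕ) (t : Fin (n + 1) → ℝ) (_ : StrictMono t)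
    (_ : ∀ i, t i ∈ Set.Icc a b),
    ∑ i : Fin n, ENNReal.ofReal (|f (t i.succ) - f (t i.castSucc)| ^ p)

/-- The p-variation norm `(V^p(f,[a;b]))^{1/p}`. -/
noncomputable def pVarNorm (f : ℝ → ℝ) (p a b : ℝ) : ℝ :=
  (pVar f p a b).toReal ^ (1 / p)

/-- Oscillation norm `sup_{a ≤ s < t ≤ b} |f t - f s|`. -/
noncomputable def oscNorm (f : ℝ → ℝ) (a b : ℝ) : ℝ :=
  sSup {x | ∃ s ∈ Set.Icc a b, ∃ t ∈ Set.Icc a b, s < t ∧ x = |f t - f s|}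

/-- Sup norm `sup_{a ≤ t ≤ b} |f t|`. -/
noncomputable def supNorm (f : ℝ → ℝ) (a b : ℝ) : ℝ :=
  sSup {x | ∃ t ∈ Set.Icc a b, x = |f t|}

/-- `I` is the Riemann–Stieltjes integral `∫_a^b f dg`. -/
def RSIntegral (f g : ℝ → ℝ) (a b : ℝ) (I : ℝ) : Prop :=
  ∀ ε > (0 : ℝ), ∃ δ > (0 : ℝ), ∀ (n : ℕ) (t : Fin (n + 1) → ℝ) (ξ : Fin n → ℝ),
    StrictMono t → t 0 = a → t (Fin.last n) = b →
    (∀ i : Fin n, t i.castSucc ≤ ξ i ∧ ξ i ≤ t i.succ) →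
    (∀ i : Fin n, t i.succ - t i.castSucc < δ) →
    |∑ i : Fin n, f (ξ i) * (g (t i.succ) - g (t i.castSucc)) - I| < ε

/-- `f` is regulated on `[a;b]`: all the relevant one-sided limits exist and are finite. -/
def Regulated (f : ℝ → ℝ) (a b : ℝ) : Prop :=
  (∃ L : ℝ, Tendsto f (nhdsWithin a (Set.Ioi a)) (nhds L)) ∧
  (∃ L : ℝ, Tendsto f (nhdsWithin b (Set.Iio b)) (nhds L)) ∧
  ∀ x ∈ Set.Ioo a b,
    (∃ L : ℝ, Tendsto f (nhdsWithin x (Set.Iio x)) (nhds L)) ∧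
    (∃ L : ℝ, Tendsto f (nhdsWithin x (Set.Ioi x)) (nhds L))

/-- `f` and `g` have no common points of discontinuity on `[a;b]`. -/
def NoCommonDiscont (f g : ℝ → ℝ) (a b : ℝ) : Prop :=
  ∀ x ∈ Set.Icc a b,
    ContinuousWithinAt f (Set.Icc a b) x ∨ ContinuousWithinAt g (Set.Icc a b) x

/-!
Among `k` interior points of a partition there is one such that the increment of `f` before it is
at most `(2 V / k) ^ (1 / p)` and the increment of `g` after it at most `(2 W / k) ^ (1 / q)`, where
`V` and `W` are the variations. Removing it changes the Riemann sum by at most the product of these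
increments, and Young's argument sums the errors down to a single interval. Bounding each increment
of `f` also by its oscillation makes the total error a multiple of
`V ^ (1 - 1 / q) * (osc f) ^ (1 + p / q - p) * W ^ (1 / q)`.

By compactness there is a function `Y` all of whose increments `Y t - Y s` are limits of Riemann
sums of `∫ f dg` from `s` to `t`. Applying the estimate on each `[s; t]` and using the
superadditivity of `W` over intervals bounds the `q`-variation of `Y`.

It remains to see that `Y t - Y a` is the Riemann–Stieltjes integral. Since `1 / p + 1 / q > 1` is
an open condition, the estimate also holds with a slightly larger `q'`, and it then carries
positive powers of the oscillations of both `f` and `g`. As one of the two functions is continuous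
at each point, the product of these powers is uniformly small on short intervals, so the local
errors add up to at most `ε * (V + W)`.
-/

open MeasureTheory
open scoped ENNReal Topology

section Sequences

variable {α : Type*}

theorem exists_monotone_extension_fin [Preorder α] {n : ℕ} {τ : Fin (n + 1) → α}
    (hτ : Monotone τ) : ∃ u : ℕ → α, Monotone u ∧ ∀ i : Fin (n + 1), u i = τ i := by
  refine ⟨fun i => τ (Fin.clamp i n), fun i j hij => hτ ?_, fun i => congrArg τ (Fin.ext ?_)⟩
  · simp only [Fin.le_def, Fin.coe_clamp]
    omega
  · simp only [Fin.coe_clamp]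
    omega

theorem exists_monotone_subset_range [LinearOrder α] [Nonempty α] (F : Finset α) :
    ∃ u : ℕ → α, Monotone u ∧ (F : Set α) ⊆ range u := by
  rcases hn : F.card with _ | n
  · rw [Finset.card_eq_zero.mp hn]
    exact ⟨fun _ => Classical.arbitrary α, monotone_const, by simp⟩
  · obtain ⟨u, hu, huF⟩ := exists_monotone_extension_fin (F.orderEmbOfFin hn).monotone
    refine ⟨u, hu, ?_⟩
    rw [← F.range_orderEmbOfFin hn]
    rintro _ ⟨i, rfl⟩
    exact ⟨i, huF i⟩

theorem exists_strictMono_fin_sum_eq [PartialOrder α] {M : Type*} [AddCommMonoid M]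
    {w : α → α → M} (hw : ∀ x, w x x = 0) {u : ℕ → α} (hu : Monotone u) (n : ℕ) :
    ∃ (m : ℕ) (τ : Fin (m + 1) → α), StrictMono τ ∧ (∀ i, τ i ∈ Icc (u 0) (u n)) ∧
      τ (Fin.last m) = u n ∧
      ∑ i : Fin m, w (τ i.castSucc) (τ i.succ) = ∑ i ∈ Finset.range n, w (u i) (u (i + 1)) := by
  induction n with
  | zero => exact ⟨0, fun _ => u 0, fun i j h => by omega, by simp, rfl, by simp⟩
  | succ n ih =>
    obtain ⟨m, τ, hτ, hmem, hlast, hsum⟩ := ih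
    rcases (hu n.le_succ).eq_or_lt with heq | hlt
    · refine ⟨m, τ, hτ, heq ▸ hmem, hlast.trans heq, ?_⟩
      rw [Finset.sum_range_succ, hsum, ← Nat.succ_eq_add_one, ← heq, hw, add_zero]
    · refine ⟨m + 1, Fin.snoc τ (u (n + 1)), ?_, ?_, Fin.snoc_last _ _, ?_⟩
      · refine Fin.strictMono_iff_lt_succ.mpr (Fin.lastCases ?_ fun i => ?_)
        · simpa [hlast] using hlt
        · simpa only [Fin.succ_castSucc, Fin.snoc_castSucc] using hτ Fin.castSucc_lt_succ
      · refine Fin.lastCases ?_ fun i => ?_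
        · simpa using hu (Nat.zero_le (n + 1))
        · rw [Fin.snoc_castSucc]
          exact Icc_subset_Icc_right (hu n.le_succ) (hmem i)
      · simp only [Fin.sum_univ_castSucc, Finset.sum_range_succ, ← hsum, Fin.succ_castSucc,
          Fin.snoc_castSucc, Fin.succ_last, Fin.snoc_last, hlast]

end Sequences

/-- The `p`-variation `V^p(f, s)` of `f` along a subset `s` of an ordered type, as an extended
nonnegative real. As for `eVariationOn`, the sequences `u` are only required to be monotone; for
`0 < p` repeated points do not contribute. -/
noncomputable def ePVariationOn {α E : Type*} [Preorder α] [PseudoEMetricSpace E]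
    (f : α → E) (p : ℝ) (s : Set α) : ℝ≥0∞ :=
  ⨆ v : {v : ℕ × (ℕ → α) // Monotone v.2 ∧ ∀ i ≤ v.1, v.2 i ∈ s},
    ∑ i ∈ Finset.range v.1.1, edist (f (v.1.2 (i + 1))) (f (v.1.2 i)) ^ p

namespace ePVariationOn

section PseudoEMetric

variable {α E F : Type*} [PseudoEMetricSpace E] [PseudoEMetricSpace F]

theorem le_iff [Preorder α] {f : α → E} {p : ℝ} {s : Set α} {B : ℝ≥0∞} :
    ePVariationOn f p s ≤ B ↔ ∀ (n : ℕ) (u : ℕ → α), Monotone u → (∀ i ≤ n, u i ∈ s) →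
      ∑ i ∈ Finset.range n, edist (f (u (i + 1))) (f (u i)) ^ p ≤ B := by
  simp only [ePVariationOn, iSup_le_iff, Subtype.forall, Prod.forall, and_imp]

theorem sum_le [Preorder α] (f : α → E) (p : ℝ) {s : Set α} {n : ℕ} {u : ℕ → α}
    (hu : Monotone u) (us : ∀ i ≤ n, u i ∈ s) :
    ∑ i ∈ Finset.range n, edist (f (u (i + 1))) (f (u i)) ^ p ≤ ePVariationOn f p s :=
  le_iff.mp le_rfl n u hu us

theorem empty [Preorder α] (f : α → E) (p : ℝ) : ePVariationOn f p ∅ = 0 :=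
  nonpos_iff_eq_zero.mp <| le_iff.mpr fun _ _ _ us => (us 0 (Nat.zero_le _)).elim

theorem mono [Preorder α] (f : α → E) (p : ℝ) {s t : Set α} (hst : s ⊆ t) :
    ePVariationOn f p s ≤ ePVariationOn f p t :=
  le_iff.mpr fun _ _ hu us => sum_le f p hu fun i hi => hst (us i hi)

theorem add_le_union [Preorder α] (f : α → E) (p : ℝ) {s t : Set α}
    (h : ∀ x ∈ s, ∀ y ∈ t, x ≤ y) :
    ePVariationOn f p s + ePVariationOn f p t ≤ ePVariationOn f p (s ∪ t) := by
  rcases s.eq_empty_or_nonempty with rfl | ⟨x, hx⟩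
  · simp [empty]
  rcases t.eq_empty_or_nonempty with rfl | ⟨y, hy⟩
  · simp [empty]
  have : Nonempty {v : ℕ × (ℕ → α) // Monotone v.2 ∧ ∀ i ≤ v.1, v.2 i ∈ s} :=
    ⟨⟨(0, fun _ => x), monotone_const, fun _ _ => hx⟩⟩
  have : Nonempty {v : ℕ × (ℕ → α) // Monotone v.2 ∧ ∀ i ≤ v.1, v.2 i ∈ t} :=
    ⟨⟨(0, fun _ => y), monotone_const, fun _ _ => hy⟩⟩
  refine ENNReal.iSup_add_iSup_le ?_
  rintro ⟨⟨n, u⟩, hu, us⟩ ⟨⟨m, v⟩, hv, vt⟩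
  dsimp only at us vt ⊢
  let w : ℕ → α := fun i => if i ≤ n then u i else v (i - (n + 1))
  have hwu {i : ℕ} (hi : i ≤ n) : w i = u i := if_pos hi
  have hwv (i : ℕ) : w (n + 1 + i) = v i := by simp [w, show ¬n + 1 + i ≤ n by omega]
  have hwm : Monotone w := by
    refine monotone_nat_of_le_succ fun i => ?_
    rcases lt_trichotomy i n with hi | rfl | hi
    · rw [hwu hi.le, hwu hi]
      exact hu i.le_succ
    · rw [hwu le_rfl, ← add_zero (i + 1), hwv]
      exact h _ (us _ le_rfl) _ (vt 0 m.zero_le)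
    · obtain ⟨j, rfl⟩ := Nat.exists_eq_add_of_le hi
      rw [add_assoc, hwv, hwv]
      exact hv j.le_succ
  refine le_trans ?_ (sum_le f p (n := n + 1 + m) hwm fun i hi => ?_)
  · rw [Finset.sum_range_add, Finset.sum_range_succ]
    refine add_le_add (le_add_right (Finset.sum_le_sum fun i hi => ?_))
      (Finset.sum_le_sum fun i _ => ?_)
    · rw [Finset.mem_range] at hi
      rw [hwu hi.le, hwu hi]
    · rw [add_assoc, hwv, hwv]
  · rcases le_or_gt i n with hin | hin
    · exact Or.inl (hwu hin ▸ us i hin)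
    · obtain ⟨j, rfl⟩ := Nat.exists_eq_add_of_le hin
      exact Or.inr (hwv j ▸ vt j (by omega))

theorem sum_Icc_le [Preorder α] (f : α → E) (p : ℝ) {u : ℕ → α} (hu : Monotone u) (n : ℕ) :
    ∑ i ∈ Finset.range n, ePVariationOn f p (Icc (u i) (u (i + 1))) ≤
      ePVariationOn f p (Icc (u 0) (u n)) := by
  induction n with
  | zero => simp
  | succ n ih =>
    rw [Finset.sum_range_succ]
    calc _ ≤ ePVariationOn f p (Icc (u 0) (u n)) + ePVariationOn f p (Icc (u n) (u (n + 1))) := by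
          gcongr
      _ ≤ ePVariationOn f p (Icc (u 0) (u n) ∪ Icc (u n) (u (n + 1))) :=
          add_le_union f p fun x hx y hy => hx.2.trans hy.1
      _ ≤ _ := mono f p (union_subset (Icc_subset_Icc_right (hu n.le_succ))
          (Icc_subset_Icc_left (hu n.zero_le)))

theorem sum_Icc_le_of_mem [Preorder α] (f : α → E) (p : ℝ) {u : ℕ → α} (hu : Monotone u) {n : ℕ}
    {a b : α} (ha : a ≤ u 0) (hb : u n ≤ b) :
    ∑ i ∈ Finset.range n, ePVariationOn f p (Icc (u i) (u (i + 1))) ≤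
      ePVariationOn f p (Icc a b) :=
  (sum_Icc_le f p hu n).trans (mono f p (Icc_subset_Icc ha hb))

theorem le_mul_of_edist_rpow_le [Preorder α] {f : α → E} {g : α → F} {q : ℝ} {a b : α}
    {K : ℝ≥0∞} (h : ∀ s t, a ≤ s → s ≤ t → t ≤ b →
      edist (f t) (f s) ^ q ≤ K * ePVariationOn g q (Icc s t)) :
    ePVariationOn f q (Icc a b) ≤ K * ePVariationOn g q (Icc a b) := by
  refine le_iff.mpr fun n u hu us => ?_
  calc ∑ i ∈ Finset.range n, edist (f (u (i + 1))) (f (u i)) ^ q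
      ≤ ∑ i ∈ Finset.range n, K * ePVariationOn g q (Icc (u i) (u (i + 1))) := by
        refine Finset.sum_le_sum fun i hi => ?_
        rw [Finset.mem_range] at hi
        exact h _ _ (us i hi.le).1 (hu i.le_succ) (us (i + 1) hi).2
    _ ≤ K * ePVariationOn g q (Icc a b) := by
        rw [← Finset.mul_sum]
        gcongr
        exact sum_Icc_le_of_mem g q hu (us 0 n.zero_le).1 (us n le_rfl).2

theorem edist_rpow_le [LinearOrder α] (f : α → E) (p : ℝ) {s : Set α} {x y : α} (hx : x ∈ s)
    (hy : y ∈ s) : edist (f x) (f y) ^ p ≤ ePVariationOn f p s := by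
  wlog hyx : y ≤ x generalizing x y
  · rw [edist_comm]
    exact this hy hx (le_of_not_ge hyx)
  have hu : Monotone fun i : ℕ => if i = 0 then y else x := by
    refine monotone_nat_of_le_succ fun i => ?_
    cases i <;> simp [hyx]
  simpa using sum_le f p (n := 1) hu fun i _ => by by_cases hi : i = 0 <;> simp [hi, hx, hy]

theorem ediam_image_le [LinearOrder α] (f : α → E) {p : ℝ} (hp : 0 < p) (s : Set α) :
    Metric.ediam (f '' s) ≤ ePVariationOn f p s ^ (1 / p) := by
  refine Metric.ediam_image_le_iff.mpr fun x hx y hy => ?_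
  rw [one_div, ENNReal.le_rpow_inv_iff hp]
  exact edist_rpow_le f p hx hy

theorem le_ediam_rpow_mul [Preorder α] (f : α → E) {p p' : ℝ} (hp : 0 ≤ p) (hpp' : p ≤ p')
    (s : Set α) :
    ePVariationOn f p' s ≤ Metric.ediam (f '' s) ^ (p' - p) * ePVariationOn f p s := by
  refine le_iff.mpr fun n u hu us => ?_
  calc ∑ i ∈ Finset.range n, edist (f (u (i + 1))) (f (u i)) ^ p'
      ≤ ∑ i ∈ Finset.range n,
          Metric.ediam (f '' s) ^ (p' - p) * edist (f (u (i + 1))) (f (u i)) ^ p := by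
        refine Finset.sum_le_sum fun i hi => ?_
        rw [Finset.mem_range] at hi
        have hd : edist (f (u (i + 1))) (f (u i)) ≤ Metric.ediam (f '' s) :=
          Metric.edist_le_ediam_of_mem (mem_image_of_mem f (us _ hi))
            (mem_image_of_mem f (us _ hi.le))
        rw [← sub_add_cancel p' p, ENNReal.rpow_add_of_nonneg _ _ (sub_nonneg.mpr hpp') hp,
          sub_add_cancel]
        gcongr
    _ ≤ Metric.ediam (f '' s) ^ (p' - p) * ePVariationOn f p s := by
        rw [← Finset.mul_sum]
        gcongr
        exact sum_le f p hu us

end PseudoEMetric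

section PseudoMetric

variable {α E : Type*} [PseudoMetricSpace E] {f : α → E} {p : ℝ} {s : Set α}

theorem isBounded_image [LinearOrder α] (hp : 0 < p) (hf : ePVariationOn f p s ≠ ⊤) :
    Bornology.IsBounded (f '' s) :=
  Metric.isBounded_iff_ediam_ne_top.mpr
    (ne_top_of_le_ne_top (ENNReal.rpow_ne_top_of_nonneg (by positivity) hf) (ediam_image_le f hp s))

theorem sum_dist_rpow_le [Preorder α] (hp : 0 ≤ p) (hf : ePVariationOn f p s ≠ ⊤) {n : ℕ}
    {u : ℕ → α} (hu : Monotone u) (us : ∀ i ≤ n, u i ∈ s) :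
    ∑ i ∈ Finset.range n, dist (f (u (i + 1))) (f (u i)) ^ p ≤ (ePVariationOn f p s).toReal := by
  rw [← ENNReal.ofReal_le_iff_le_toReal hf,
    ENNReal.ofReal_sum_of_nonneg fun i _ => Real.rpow_nonneg dist_nonneg p]
  simp only [← ENNReal.ofReal_rpow_of_nonneg dist_nonneg hp, ← edist_dist]
  exact sum_le f p hu us

theorem dist_le [LinearOrder α] (hp : 0 < p) (hf : ePVariationOn f p s ≠ ⊤) {x y : α}
    (hx : x ∈ s) (hy : y ∈ s) : dist (f x) (f y) ≤ (ePVariationOn f p s).toReal ^ (1 / p) := by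
  rw [dist_edist, ENNReal.toReal_rpow]
  refine ENNReal.toReal_mono (ENNReal.rpow_ne_top_of_nonneg (by positivity) hf) ?_
  exact (Metric.edist_le_ediam_of_mem (mem_image_of_mem f hx) (mem_image_of_mem f hy)).trans
    (ediam_image_le f hp s)

theorem ne_top_of_le [LinearOrder α] {p' : ℝ} (hp : 0 < p) (hpp' : p ≤ p')
    (hf : ePVariationOn f p s ≠ ⊤) : ePVariationOn f p' s ≠ ⊤ :=
  ne_top_of_le_ne_top (ENNReal.mul_ne_top (ENNReal.rpow_ne_top_of_nonneg (sub_nonneg.mpr hpp')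
    (isBounded_image hp hf).ediam_ne_top) hf) (le_ediam_rpow_mul f hp.le hpp' s)

theorem toReal_le_diam_rpow_mul [LinearOrder α] {p' : ℝ} (hp : 0 < p) (hpp' : p ≤ p')
    (hf : ePVariationOn f p s ≠ ⊤) :
    (ePVariationOn f p' s).toReal ≤
      Metric.diam (f '' s) ^ (p' - p) * (ePVariationOn f p s).toReal := by
  rw [Metric.diam, ENNReal.toReal_rpow, ← ENNReal.toReal_mul]
  exact ENNReal.toReal_mono (ENNReal.mul_ne_top (ENNReal.rpow_ne_top_of_nonneg
    (sub_nonneg.mpr hpp') (isBounded_image hp hf).ediam_ne_top) hf)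
    (le_ediam_rpow_mul f hp.le hpp' s)

theorem sum_toReal_Icc_le [Preorder α] {a b : α} (hf : ePVariationOn f p (Icc a b) ≠ ⊤)
    {u : ℕ → α} (hu : Monotone u) {n : ℕ} (ha : a ≤ u 0) (hb : u n ≤ b) :
    ∑ i ∈ Finset.range n, (ePVariationOn f p (Icc (u i) (u (i + 1)))).toReal ≤
      (ePVariationOn f p (Icc a b)).toReal := by
  rw [← ENNReal.toReal_sum fun i hi => ?_]
  · exact ENNReal.toReal_mono hf (sum_Icc_le_of_mem f p hu ha hb)
  · rw [Finset.mem_range] at hi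
    exact ne_top_of_le_ne_top hf
      (mono f p (Icc_subset_Icc (ha.trans (hu i.zero_le)) ((hu hi).trans hb)))

theorem toReal_rpow_le_mul_of_dist_le [Preorder α] {F : Type*} [PseudoMetricSpace F]
    {g : α → F} {q K : ℝ} {a b : α} (hq : 0 < q) (hg : ePVariationOn g q (Icc a b) ≠ ⊤)
    (hK : 0 ≤ K) (h : ∀ s t, a ≤ s → s ≤ t → t ≤ b →
      dist (f t) (f s) ≤ K * (ePVariationOn g q (Icc s t)).toReal ^ (1 / q)) :
    (ePVariationOn f q (Icc a b)).toReal ^ (1 / q) ≤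
      K * (ePVariationOn g q (Icc a b)).toReal ^ (1 / q) := by
  have hle : ePVariationOn f q (Icc a b) ≤
      ENNReal.ofReal (K ^ q) * ePVariationOn g q (Icc a b) := by
    refine le_mul_of_edist_rpow_le fun s t has hst htb => ?_
    have hgst := ne_top_of_le_ne_top hg (mono g q (Icc_subset_Icc has htb))
    rw [edist_dist, ENNReal.ofReal_rpow_of_nonneg dist_nonneg hq.le, ← ENNReal.ofReal_toReal hgst,
      ← ENNReal.ofReal_mul (by positivity)]
    refine ENNReal.ofReal_le_ofReal ((Real.rpow_le_rpow dist_nonneg (h s t has hst htb) hq.le).trans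
      (Eq.le ?_))
    rw [Real.mul_rpow hK (by positivity), one_div, Real.rpow_inv_rpow ENNReal.toReal_nonneg hq.ne']
  have hle' := ENNReal.toReal_mono (ENNReal.mul_ne_top ENNReal.ofReal_ne_top hg) hle
  rw [ENNReal.toReal_mul, ENNReal.toReal_ofReal (by positivity)] at hle'
  calc (ePVariationOn f q (Icc a b)).toReal ^ (1 / q)
      ≤ (K ^ q * (ePVariationOn g q (Icc a b)).toReal) ^ (1 / q) := by gcongr
    _ = K * (ePVariationOn g q (Icc a b)).toReal ^ (1 / q) := by
        rw [Real.mul_rpow (by positivity) ENNReal.toReal_nonneg, one_div,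
          Real.rpow_rpow_inv hK hq.ne']

end PseudoMetric

end ePVariationOn

theorem pVar_eq_ePVariationOn (f : ℝ → ℝ) {p : ℝ} (hp : 0 < p) (a b : ℝ) :
    pVar f p a b = ePVariationOn f p (Icc a b) := by
  have hterm (x y : ℝ) : ENNReal.ofReal (|f y - f x| ^ p) = edist (f y) (f x) ^ p := by
    rw [← ENNReal.ofReal_rpow_of_nonneg (abs_nonneg _) hp.le, edist_dist, Real.dist_eq]
  simp only [pVar, hterm]
  apply le_antisymm
  · refine iSup_le fun n => iSup_le fun τ => iSup_le fun hτ => iSup_le fun hmem => ?_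
    obtain ⟨u, hu, huτ⟩ := exists_monotone_extension_fin hτ.monotone
    simp only [← huτ, Fin.val_succ, Fin.val_castSucc] at hmem ⊢
    rw [Fin.sum_univ_eq_sum_range fun i => edist (f (u (i + 1))) (f (u i)) ^ p]
    exact ePVariationOn.sum_le f p hu fun i hi => hmem ⟨i, Nat.lt_succ_of_le hi⟩
  · refine ePVariationOn.le_iff.mpr fun n u hu us => ?_
    obtain ⟨m, τ, hτ, hmem, -, hsum⟩ := exists_strictMono_fin_sum_eq
      (w := fun x y => edist (f y) (f x) ^ p) (by simp [hp]) hu n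
    rw [← hsum]
    have hsub : Icc (u 0) (u n) ⊆ Icc a b := Icc_subset_Icc (us 0 n.zero_le).1 (us n le_rfl).2
    exact le_iSup_of_le m <| le_iSup_of_le τ <| le_iSup_of_le hτ <|
      le_iSup_of_le (fun i => hsub (hmem i)) le_rfl

section YoungConstant

variable {p q : ℝ}

theorem pos_of_one_lt_one_div_add (hq : 1 < q) (hpq : 1 < 1 / p + 1 / q) : 0 < p := by
  have : 1 / q < 1 := (div_lt_one (by positivity)).mpr hq
  exact one_div_pos.mp (by linarith)

theorem one_add_div_sub_pos (hq : 1 < q) (hpq : 1 < 1 / p + 1 / q) : 0 < 1 + p / q - p := by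
  have hp := pos_of_one_lt_one_div_add hq hpq
  have : p * 1 < p * (1 / p + 1 / q) := by gcongr
  have : p * (1 / p + 1 / q) = 1 + p / q := by field_simp
  linarith

theorem sum_range_le_integral_Ioi {G : ℝ → ℝ} (hG : AntitoneOn G (Ioi 0))
    (hG0 : ∀ x, 0 < x → 0 ≤ G x) (hint : IntegrableOn G (Ioi 0)) (m : ℕ) :
    ∑ k ∈ Finset.range m, G (k + 1) ≤ ∫ x in Ioi 0, G x := by
  have hintv (k l : ℕ) : IntervalIntegrable G volume k l :=
    ⟨hint.mono_set fun x hx => (Nat.cast_nonneg k).trans_lt hx.1,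
      hint.mono_set fun x hx => (Nat.cast_nonneg l).trans_lt hx.1⟩
  calc ∑ k ∈ Finset.range m, G (k + 1)
      ≤ ∑ k ∈ Finset.range m, ∫ x in (k : ℝ)..(k + 1 : ℕ), G x := by
        refine Finset.sum_le_sum fun k _ => ?_
        calc G (k + 1) = ∫ _ in (k : ℝ)..(k + 1 : ℕ), G (k + 1) := by simp
          _ ≤ ∫ x in (k : ℝ)..(k + 1 : ℕ), G x := by
            refine intervalIntegral.integral_mono_on_of_le_Ioo (by simp) (by simp)
              (hintv k (k + 1)) fun x hx => ?_
            have hx0 : 0 < x := (Nat.cast_nonneg k).trans_lt hx.1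
            rw [Nat.cast_succ] at hx
            exact hG hx0 (hx0.trans hx.2) hx.2.le
    _ = ∫ x in (0 : ℝ)..m, G x := by
        simpa using intervalIntegral.sum_integral_adjacent_intervals (n := m)
          (a := fun k : ℕ => (k : ℝ)) fun k _ => hintv k (k + 1)
    _ = ∫ x in Ioc 0 (m : ℝ), G x := intervalIntegral.integral_of_le m.cast_nonneg
    _ ≤ ∫ x in Ioi 0, G x :=
        setIntegral_mono_set hint ((ae_restrict_mem measurableSet_Ioi).mono hG0)
          Ioc_subset_Ioi_self.eventuallyLE

/-- The profile `y ↦ min(1, y^(-1/p)) y^(-1/q)` to which the increments that are removed in the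
proof of the Young–Love inequality compare after rescaling. -/
noncomputable def youngKernel (p q y : ℝ) : ℝ :=
  min 1 (y ^ (-(1 / p))) * y ^ (-(1 / q))

theorem youngKernel_nonneg {y : ℝ} (hy : 0 < y) : 0 ≤ youngKernel p q y := by
  unfold youngKernel
  positivity

theorem antitoneOn_youngKernel (hp : 0 ≤ p) (hq : 0 ≤ q) :
    AntitoneOn (youngKernel p q) (Ioi 0) := by
  intro x hx y _ hxy
  have hrpow {r : ℝ} (hr : 0 ≤ r) : y ^ (-(1 / r)) ≤ x ^ (-(1 / r)) :=
    Real.rpow_le_rpow_of_nonpos hx hxy (neg_nonpos.mpr (one_div_nonneg.mpr hr))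
  have hx0 : 0 ≤ x := (mem_Ioi.mp hx).le
  have hy0 : 0 ≤ y := hx0.trans hxy
  exact mul_le_mul (min_le_min_left 1 (hrpow hp)) (hrpow hq) (by positivity) (by positivity)

theorem integrableOn_youngKernel (hq : 1 < q) (hpq : 1 < 1 / p + 1 / q) :
    IntegrableOn (youngKernel p q) (Ioi 0) := by
  have hmeas : Measurable (youngKernel p q) := by
    unfold youngKernel
    fun_prop
  rw [← Ioc_union_Ioi_eq_Ioi zero_le_one]
  refine IntegrableOn.union ?_ ?_
  · have hq1 : 1 / q < 1 := (div_lt_one (by positivity)).mpr hq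
    refine Integrable.mono' (g := fun y : ℝ => y ^ (-(1 / q)))
      (intervalIntegral.intervalIntegrable_rpow' (by linarith)).1 hmeas.aestronglyMeasurable
      ((ae_restrict_mem measurableSet_Ioc).mono fun y hy => ?_)
    rw [Real.norm_of_nonneg (youngKernel_nonneg hy.1)]
    exact mul_le_of_le_one_left (Real.rpow_nonneg hy.1.le _) (min_le_left _ _)
  · refine Integrable.mono' (integrableOn_Ioi_rpow_of_lt (a := -(1 / p) + -(1 / q)) (by linarith)
      zero_lt_one) hmeas.aestronglyMeasurable
      ((ae_restrict_mem measurableSet_Ioi).mono fun y hy => ?_)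
    have hy0 : 0 < y := zero_lt_one.trans hy
    rw [Real.norm_of_nonneg (youngKernel_nonneg hy0), Real.rpow_add hy0]
    exact mul_le_mul_of_nonneg_right (min_le_right _ _) (Real.rpow_nonneg hy0.le _)

theorem sum_youngKernel_le (hq : 1 < q) (hpq : 1 < 1 / p + 1 / q) {N : ℝ} (hN : 0 < N) (m : ℕ) :
    ∑ k ∈ Finset.range m, youngKernel p q ((k + 1) / N) ≤
      N * ∫ y in Ioi 0, youngKernel p q y := by
  have hmaps : MapsTo (· / N) (Ioi 0) (Ioi 0) := fun x hx => div_pos hx hN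
  have hscale := integral_comp_mul_right_Ioi (youngKernel p q) 0 (inv_pos.mpr hN)
  simp only [← div_eq_mul_inv, inv_inv, smul_eq_mul, zero_div] at hscale
  rw [← hscale]
  refine sum_range_le_integral_Ioi (G := fun x => youngKernel p q (x / N)) ?_ ?_ ?_ m
  · have hp := pos_of_one_lt_one_div_add hq hpq
    exact (antitoneOn_youngKernel hp.le (by positivity)).comp_MonotoneOn
      (fun x _ y _ hxy => by gcongr) hmaps
  · exact fun x hx => youngKernel_nonneg (hmaps hx)
  · have := integrableOn_Ioi_comp_mul_right_iff (youngKernel p q) 0 (inv_pos.mpr hN)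
    rw [zero_mul] at this
    simpa only [← div_eq_mul_inv] using this.mpr (integrableOn_youngKernel hq hpq)

theorem min_mul_rpow_eq_mul_youngKernel (hp : p ≠ 0) {V W O x : ℝ} (hV : 0 < V) (hW : 0 ≤ W)
    (hO : 0 < O) (hx : 0 < x) :
    min O ((V / x) ^ (1 / p)) * (W / x) ^ (1 / q) =
      O * (W / (V / O ^ p)) ^ (1 / q) * youngKernel p q (x / (V / O ^ p)) := by
  have hneg (r : ℝ) : (x / (V / O ^ p)) ^ (-(1 / r)) = (V / O ^ p / x) ^ (1 / r) := by
    rw [Real.rpow_neg (by positivity), ← Real.inv_rpow (by positivity), inv_div]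
  have hVx : (V / x) ^ (1 / p) = O * (V / O ^ p / x) ^ (1 / p) := by
    rw [show V / x = O ^ p * (V / O ^ p / x) by field_simp,
      Real.mul_rpow (by positivity) (by positivity), one_div, Real.rpow_rpow_inv hO.le hp]
  have hWx : (W / x) ^ (1 / q) = (W / (V / O ^ p)) ^ (1 / q) * (V / O ^ p / x) ^ (1 / q) := by
    rw [← Real.mul_rpow (by positivity) (by positivity)]
    congr 1
    field_simp
  have hmin : min O (O * (V / O ^ p / x) ^ (1 / p)) = O * min 1 ((V / O ^ p / x) ^ (1 / p)) := by
    rw [mul_min_of_nonneg _ _ hO.le, mul_one]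
  rw [youngKernel, hneg, hneg, hVx, hWx, hmin]
  ring

theorem sum_min_mul_rpow_le (hq : 1 < q) (hpq : 1 < 1 / p + 1 / q) {V W O : ℝ} (hV : 0 ≤ V)
    (hW : 0 ≤ W) (hO : 0 ≤ O) (m : ℕ) :
    ∑ k ∈ Finset.range m, min O ((V / (k + 1)) ^ (1 / p)) * (W / (k + 1)) ^ (1 / q) ≤
      (∫ y in Ioi 0, youngKernel p q y) * V ^ (1 - 1 / q) * O ^ (1 + p / q - p) *
        W ^ (1 / q) := by
  have hp := pos_of_one_lt_one_div_add hq hpq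
  have hq1 : 0 < 1 - 1 / q := sub_pos.mpr ((div_lt_one (by positivity)).mpr hq)
  have hr := one_add_div_sub_pos hq hpq
  rcases hV.eq_or_lt with rfl | hV
  · simp [-one_div, hO, hp.ne', hq1.ne']
  rcases hO.eq_or_lt with rfl | hO
  · have hmin (k : ℕ) : min 0 ((V / (k + 1)) ^ (1 / p)) = 0 := min_eq_left (by positivity)
    simp [-one_div, hmin, hr.ne']
  set N : ℝ := V / O ^ p with hN
  have hN0 : 0 < N := by positivity
  have hpow : N * (W / N) ^ (1 / q) = V ^ (1 - 1 / q) * (O ^ p) ^ (1 / q - 1) * W ^ (1 / q) := by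
    rw [Real.div_rpow hW hN0.le, ← neg_sub 1 (1 / q), Real.rpow_neg (by positivity),
      ← div_eq_mul_inv, ← Real.div_rpow hV.le (by positivity), ← hN, Real.rpow_sub hN0,
      Real.rpow_one]
    ring
  calc _ = O * (W / N) ^ (1 / q) * ∑ k ∈ Finset.range m, youngKernel p q ((k + 1) / N) := by
        rw [Finset.mul_sum]
        exact Finset.sum_congr rfl fun k _ =>
          min_mul_rpow_eq_mul_youngKernel hp.ne' hV hW hO k.cast_add_one_pos
    _ ≤ O * (W / N) ^ (1 / q) * (N * ∫ y in Ioi 0, youngKernel p q y) := by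
        gcongr
        exact sum_youngKernel_le hq hpq hN0 m
    _ = O * (O ^ p) ^ (1 / q - 1) * V ^ (1 - 1 / q) * W ^ (1 / q) *
          ∫ y in Ioi 0, youngKernel p q y := by
        linear_combination (O * ∫ y in Ioi 0, youngKernel p q y) * hpow
    _ = _ := by
        rw [← Real.rpow_mul hO.le, ← Real.rpow_one_add' hO.le (by ring_nf at hr ⊢; exact hr.ne'),
          show 1 + p * (1 / q - 1) = 1 + p / q - p by ring]
        ring

end YoungConstant

theorem exists_le_two_mul_sum_div_card {ι : Type*} {s : Finset ι} (hs : s.Nonempty) {a b : ι → ℝ}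
    (ha : ∀ i ∈ s, 0 ≤ a i) (hb : ∀ i ∈ s, 0 ≤ b i) :
    ∃ i ∈ s, a i ≤ 2 * (∑ j ∈ s, a j) / s.card ∧ b i ≤ 2 * (∑ j ∈ s, b j) / s.card := by
  have hcard : (0 : ℝ) < s.card := by exact_mod_cast hs.card_pos
  obtain ⟨i, his, hi⟩ : ∃ i ∈ s, a i / ∑ j ∈ s, a j + b i / ∑ j ∈ s, b j ≤ 2 / s.card := by
    refine Finset.exists_le_of_sum_le hs ?_
    rw [Finset.sum_add_distrib, ← Finset.sum_div, ← Finset.sum_div, Finset.sum_const, nsmul_eq_mul,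
      mul_div_cancel₀ _ hcard.ne']
    linarith [div_self_le_one (∑ j ∈ s, a j), div_self_le_one (∑ j ∈ s, b j)]
  have le_of_div_le {c : ι → ℝ} (hc : ∀ i ∈ s, 0 ≤ c i) (h : c i / ∑ j ∈ s, c j ≤ 2 / s.card) :
      c i ≤ 2 * (∑ j ∈ s, c j) / s.card := by
    have hzero : ∑ j ∈ s, c j = 0 → c i = 0 := fun h0 =>
      (Finset.sum_eq_zero_iff_of_nonneg hc).mp h0 i his
    calc c i = c i / (∑ j ∈ s, c j) * ∑ j ∈ s, c j := (div_mul_cancel_of_imp hzero).symm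
      _ ≤ 2 / s.card * ∑ j ∈ s, c j := by
          gcongr
          exact Finset.sum_nonneg hc
      _ = 2 * (∑ j ∈ s, c j) / s.card := by ring
  have ha0 : 0 ≤ a i / ∑ j ∈ s, a j := div_nonneg (ha i his) (Finset.sum_nonneg ha)
  have hb0 : 0 ≤ b i / ∑ j ∈ s, b j := div_nonneg (hb i his) (Finset.sum_nonneg hb)
  exact ⟨i, his, le_of_div_le ha (by linarith), le_of_div_le hb (by linarith)⟩

theorem ePVariationOn.exists_dist_le_and_dist_le {α E F : Type*} [Preorder α]
    [PseudoMetricSpace E] [PseudoMetricSpace F] {f : α → E} {g : α → F} {p q : ℝ} {s : Set α}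
    (hp : 0 < p) (hq : 0 < q) (hf : ePVariationOn f p s ≠ ⊤) (hg : ePVariationOn g q s ≠ ⊤)
    {u : ℕ → α} (hu : Monotone u) {m : ℕ} (us : ∀ i ≤ m + 2, u i ∈ s) :
    ∃ k ≤ m,
      dist (f (u (k + 1))) (f (u k)) ≤ (2 * (ePVariationOn f p s).toReal / (m + 1)) ^ (1 / p) ∧
      dist (g (u (k + 2))) (g (u (k + 1))) ≤
        (2 * (ePVariationOn g q s).toReal / (m + 1)) ^ (1 / q) := by
  obtain ⟨k, hk, hfk, hgk⟩ := exists_le_two_mul_sum_div_card (s := Finset.range (m + 1))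
    Finset.nonempty_range_add_one
    (a := fun i => dist (f (u (i + 1))) (f (u i)) ^ p)
    (b := fun i => dist (g (u (i + 2))) (g (u (i + 1))) ^ q)
    (fun _ _ => by positivity) (fun _ _ => by positivity)
  have hfsum := sum_dist_rpow_le hp.le hf hu (n := m + 1) fun i hi => us i (by omega)
  have hgsum := sum_dist_rpow_le hq.le hg (n := m + 1) (hu.comp (monotone_id.add_const 1))
    fun i hi => us (i + 1) (by omega)
  rw [Finset.card_range, Nat.cast_add_one] at hfk hgk
  refine ⟨k, Finset.mem_range_succ_iff.mp hk, ?_, ?_⟩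
  · rw [one_div, Real.le_rpow_inv_iff_of_pos dist_nonneg (by positivity) hp]
    exact hfk.trans (by gcongr)
  · rw [one_div, Real.le_rpow_inv_iff_of_pos dist_nonneg (by positivity) hq]
    exact hgk.trans (by gcongr; exact hgsum)

section YoungLove

variable {α R E : Type*} [SeminormedRing R] [SeminormedAddCommGroup E] [Module R E]

/-- The left Riemann sum of `∫ f dg` along the points `u 0, …, u n`. -/
def leftRiemannSum (f : α → R) (g : α → E) (u : ℕ → α) (n : ℕ) : E :=
  ∑ i ∈ Finset.range n, f (u i) • (g (u (i + 1)) - g (u i))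

theorem leftRiemannSum_succ (f : α → R) (g : α → E) (u : ℕ → α) (n : ℕ) :
    leftRiemannSum f g u (n + 1) =
      leftRiemannSum f g u n + f (u n) • (g (u (n + 1)) - g (u n)) :=
  Finset.sum_range_succ _ n

theorem leftRiemannSum_sub_leftRiemannSum_skip (f : α → R) (g : α → E) (u : ℕ → α) {k m : ℕ}
    (hkm : k ≤ m) :
    leftRiemannSum f g u (m + 2) -
        leftRiemannSum f g (fun j => u (if j < k + 1 then j else j + 1)) (m + 1) =
      (f (u (k + 1)) - f (u k)) • (g (u (k + 2)) - g (u (k + 1))) := by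
  set v : ℕ → α := fun j => u (if j < k + 1 then j else j + 1)
  have hlt {j : ℕ} (hj : j < k + 1) : v j = u j := congrArg u (if_pos hj)
  have hge {j : ℕ} (hj : k + 1 ≤ j) : v j = u (j + 1) := congrArg u (if_neg hj.not_gt)
  induction m, hkm using Nat.le_induction with
  | base =>
    have hhead : leftRiemannSum f g v k = leftRiemannSum f g u k := by
      refine Finset.sum_congr rfl fun i hi => ?_
      rw [Finset.mem_range] at hi
      rw [hlt (by omega), hlt (by omega)]
    rw [leftRiemannSum_succ, leftRiemannSum_succ, leftRiemannSum_succ, hhead, hlt k.lt_succ_self,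
      hge le_rfl]
    simp only [smul_sub, sub_smul]
    abel
  | succ m hkm ih =>
    rw [leftRiemannSum_succ, leftRiemannSum_succ _ _ v, hge (by omega), hge (by omega), ← ih]
    abel

variable [LinearOrder α] [IsBoundedSMul R E] {f : α → R} {g : α → E} {p q : ℝ} {s : Set α}

theorem norm_leftRiemannSum_sub_le_sum (hp : 0 < p) (hq : 0 < q) (hf : ePVariationOn f p s ≠ ⊤)
    (hg : ePVariationOn g q s ≠ ⊤) {u : ℕ → α} (hu : Monotone u) {m : ℕ}
    (us : ∀ i ≤ m + 1, u i ∈ s) :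
    ‖leftRiemannSum f g u (m + 1) - f (u 0) • (g (u (m + 1)) - g (u 0))‖ ≤
      ∑ k ∈ Finset.range m, min (Metric.diam (f '' s))
          ((2 * (ePVariationOn f p s).toReal / (k + 1)) ^ (1 / p)) *
        (2 * (ePVariationOn g q s).toReal / (k + 1)) ^ (1 / q) := by
  induction m generalizing u with
  | zero => simp [leftRiemannSum]
  | succ m ih =>
    obtain ⟨k, hkm, hfk, hgk⟩ := ePVariationOn.exists_dist_le_and_dist_le hp hq hf hg hu us
    rw [dist_eq_norm] at hfk hgk
    have hosc : ‖f (u (k + 1)) - f (u k)‖ ≤ Metric.diam (f '' s) := by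
      rw [← dist_eq_norm]
      exact Metric.dist_le_diam_of_mem (ePVariationOn.isBounded_image hp hf)
        (mem_image_of_mem f (us _ (by omega))) (mem_image_of_mem f (us _ (by omega)))
    have hskip := ih (u := fun j => u (if j < k + 1 then j else j + 1))
      (fun i j hij => hu (by split_ifs <;> omega)) fun i hi => us _ (by split_ifs <;> omega)
    rw [if_pos k.succ_pos, if_neg (by omega)] at hskip
    rw [Finset.sum_range_succ, add_comm (Finset.sum _ _), ← sub_add_sub_cancel _
      (leftRiemannSum f g (fun j => u (if j < k + 1 then j else j + 1)) (m + 1)),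
      leftRiemannSum_sub_leftRiemannSum_skip f g u hkm]
    refine (norm_add_le _ _).trans (add_le_add ((norm_smul_le _ _).trans ?_) hskip)
    gcongr
    exact le_min hosc hfk

/-- The constant of the Young–Love inequality. -/
noncomputable def youngConst (p q : ℝ) : ℝ :=
  2 * (∫ y in Ioi 0, youngKernel p q y) + 1

theorem youngConst_pos (p q : ℝ) : 0 < youngConst p q := by
  have : 0 ≤ ∫ y in Ioi 0, youngKernel p q y :=
    setIntegral_nonneg measurableSet_Ioi fun _ => youngKernel_nonneg
  unfold youngConst
  linarith

/-- The right-hand side of the Young–Love inequality on `s`, in which part of the `p`-variation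
of `f` is traded for a power of its oscillation. -/
noncomputable def youngBound (f : α → R) (g : α → E) (p q : ℝ) (s : Set α) : ℝ :=
  youngConst p q * (ePVariationOn f p s).toReal ^ (1 - 1 / q) *
    Metric.diam (f '' s) ^ (1 + p / q - p) * (ePVariationOn g q s).toReal ^ (1 / q)

theorem le_rpow_mul_rpow_one_sub {d V O r : ℝ} (hd : 0 ≤ d) (hdV : d ^ p ≤ V) (hdO : d ≤ O)
    (hr : 0 ≤ r) (hpr : p * r ≤ 1) : d ≤ V ^ r * O ^ (1 - p * r) := by
  have : 0 ≤ 1 - p * r := sub_nonneg.mpr hpr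
  rcases hd.eq_or_lt with rfl | hd
  · exact mul_nonneg (Real.rpow_nonneg ((Real.rpow_nonneg le_rfl p).trans hdV) r)
      (Real.rpow_nonneg hdO _)
  calc d = (d ^ p) ^ r * d ^ (1 - p * r) := by
        rw [← Real.rpow_mul hd.le, ← Real.rpow_add hd, add_sub_cancel, Real.rpow_one]
    _ ≤ V ^ r * O ^ (1 - p * r) := by
        have : 0 ≤ V := (Real.rpow_nonneg hd.le p).trans hdV
        gcongr

theorem ePVariationOn.dist_le_rpow_mul_diam_rpow {X : Type*} [PseudoMetricSpace X] {f : α → X}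
    (hp : 0 < p) (hf : ePVariationOn f p s ≠ ⊤) {r : ℝ} (hr : 0 ≤ r) (hpr : p * r ≤ 1) {x y : α}
    (hx : x ∈ s) (hy : y ∈ s) :
    dist (f x) (f y) ≤ (ePVariationOn f p s).toReal ^ r * Metric.diam (f '' s) ^ (1 - p * r) := by
  refine le_rpow_mul_rpow_one_sub dist_nonneg ?_ ?_ hr hpr
  · rw [← Real.le_rpow_inv_iff_of_pos dist_nonneg ENNReal.toReal_nonneg hp, ← one_div]
    exact ePVariationOn.dist_le hp hf hx hy
  · exact Metric.dist_le_diam_of_mem (ePVariationOn.isBounded_image hp hf)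
      (mem_image_of_mem f hx) (mem_image_of_mem f hy)

theorem norm_leftRiemannSum_sub_le_youngBound (hq : 1 < q) (hpq : 1 < 1 / p + 1 / q)
    (hf : ePVariationOn f p s ≠ ⊤) (hg : ePVariationOn g q s ≠ ⊤) {u : ℕ → α} (hu : Monotone u)
    {n : ℕ} (us : ∀ i ≤ n, u i ∈ s) {c : α} (hc : c ∈ s) :
    ‖leftRiemannSum f g u n - f c • (g (u n) - g (u 0))‖ ≤ youngBound f g p q s := by
  have hp := pos_of_one_lt_one_div_add hq hpq
  have hq0 : 0 < q := by positivity
  have hq1 : 0 ≤ 1 - 1 / q := sub_nonneg.mpr ((div_le_one hq0).mpr hq.le)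
  have hr := one_add_div_sub_pos hq hpq
  have hC := youngConst_pos p q
  rcases n with _ | m
  · simp only [leftRiemannSum, Finset.range_zero, Finset.sum_empty, sub_self, smul_zero, norm_zero,
      youngBound]
    positivity
  set V := (ePVariationOn f p s).toReal
  set W := (ePVariationOn g q s).toReal
  set O := Metric.diam (f '' s)
  have h0 := us 0 m.succ.zero_le
  have hsum := (norm_leftRiemannSum_sub_le_sum hp hq0 hf hg hu us).trans
    (sum_min_mul_rpow_le hq hpq (by positivity) (by positivity) Metric.diam_nonneg m)
  have htwo : (2 * V) ^ (1 - 1 / q) * (2 * W) ^ (1 / q) = 2 * V ^ (1 - 1 / q) * W ^ (1 / q) := by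
    rw [Real.mul_rpow two_pos.le ENNReal.toReal_nonneg, Real.mul_rpow two_pos.le
      ENNReal.toReal_nonneg, mul_mul_mul_comm, ← Real.rpow_add two_pos, sub_add_cancel,
      Real.rpow_one, mul_assoc]
  have hfc : ‖f (u 0) - f c‖ ≤ V ^ (1 - 1 / q) * O ^ (1 + p / q - p) := by
    rw [← dist_eq_norm, show 1 + p / q - p = 1 - p * (1 - 1 / q) by ring]
    exact ePVariationOn.dist_le_rpow_mul_diam_rpow hp hf hq1 (by linarith [mul_one_div p q]) h0 hc
  have hgu : ‖g (u (m + 1)) - g (u 0)‖ ≤ W ^ (1 / q) :=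
    dist_eq_norm (g _) _ ▸ ePVariationOn.dist_le hq0 hg (us _ le_rfl) h0
  calc ‖leftRiemannSum f g u (m + 1) - f c • (g (u (m + 1)) - g (u 0))‖
      = ‖(leftRiemannSum f g u (m + 1) - f (u 0) • (g (u (m + 1)) - g (u 0))) +
          (f (u 0) - f c) • (g (u (m + 1)) - g (u 0))‖ := by
        rw [sub_smul, sub_add_sub_cancel]
    _ ≤ _ + (V ^ (1 - 1 / q) * O ^ (1 + p / q - p)) * W ^ (1 / q) := by
        refine (norm_add_le _ _).trans (add_le_add hsum ((norm_smul_le _ _).trans ?_))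
        gcongr
    _ = youngBound f g p q s := by
        rw [youngBound, youngConst]
        linear_combination (∫ y in Ioi 0, youngKernel p q y) * O ^ (1 + p / q - p) * htwo

/-- The set of all left Riemann sums of `∫ f dg` from `s` to `t`. -/
def leftRiemannSums (f : α → R) (g : α → E) (s t : α) : Set E :=
  {x | ∃ (n : ℕ) (u : ℕ → α), Monotone u ∧ u 0 = s ∧ u n = t ∧ leftRiemannSum f g u n = x}

theorem leftRiemannSums_subset_closedBall (hq : 1 < q) (hpq : 1 < 1 / p + 1 / q) {a b c : α}
    (hf : ePVariationOn f p (Icc a b) ≠ ⊤) (hg : ePVariationOn g q (Icc a b) ≠ ⊤)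
    (hc : c ∈ Icc a b) :
    leftRiemannSums f g a b ⊆
      Metric.closedBall (f c • (g b - g a)) (youngBound f g p q (Icc a b)) := by
  rintro _ ⟨n, u, hu, rfl, rfl, rfl⟩
  rw [mem_closedBall_iff_norm]
  exact norm_leftRiemannSum_sub_le_youngBound hq hpq hf hg hu
    (fun i hi => ⟨hu i.zero_le, hu hi⟩) hc

end YoungLove

section WeakPrimitive

theorem exists_sub_mem_leftRiemannSums {α R E : Type*} [LinearOrder α] [Nonempty α]
    [SeminormedRing R] [SeminormedAddCommGroup E] [Module R E] (f : α → R) (g : α → E)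
    (F : Finset α) :
    ∃ Z : α → E, ∀ s ∈ F, ∀ t ∈ F, s ≤ t → Z t - Z s ∈ leftRiemannSums f g s t := by
  obtain ⟨u, hu, hF⟩ := exists_monotone_subset_range F
  choose! k hk using fun x (hx : x ∈ F) => hF hx
  refine ⟨fun x => leftRiemannSum f g u (k x), fun s hs t ht hst => ?_⟩
  rcases hst.eq_or_lt with rfl | hst
  · exact ⟨0, fun _ => s, monotone_const, rfl, rfl, by simp [leftRiemannSum]⟩
  have hkst : k s ≤ k t := hu.reflect_lt (by rwa [hk s hs, hk t ht]) |>.le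
  obtain ⟨n, hn⟩ := Nat.exists_eq_add_of_le hkst
  refine ⟨n, fun i => u (k s + i), hu.comp (monotone_id.const_add (k s)), hk s hs,
    (congrArg u hn).symm.trans (hk t ht), ?_⟩
  simp only [leftRiemannSum, hn, Finset.sum_range_add, add_sub_cancel_left, ← add_assoc]

theorem exists_sub_mem_closure {α E : Type*} [Preorder α] [SeminormedAddCommGroup E]
    [ProperSpace E] {S : α → α → Set E} {a b : α}
    (hbdd : ∀ t ∈ Icc a b, Bornology.IsBounded (S a t))
    (hS : ∀ F : Finset α, ∃ Z : α → E, ∀ s ∈ F, ∀ t ∈ F, s ≤ t → Z t - Z s ∈ S s t) :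
    ∃ Y : α → E, ∀ s ∈ Icc a b, ∀ t ∈ Icc a b, s ≤ t → Y t - Y s ∈ closure (S s t) := by
  choose Z hZ using hS
  let U : Ultrafilter (Finset α) := Ultrafilter.of atTop
  have hmem (x : α) : ∀ᶠ F in (U : Filter (Finset α)), x ∈ F :=
    Ultrafilter.of_le atTop <| (eventually_ge_atTop {x}).mono fun _ hF =>
      hF (Finset.mem_singleton_self x)
  have hlim (t : α) : ∃ y, t ∈ Icc a b → Tendsto (fun F => Z F t - Z F a) U (𝓝 y) := by
    by_cases ht : t ∈ Icc a b
    · obtain ⟨y, -, hy⟩ := (hbdd t ht).isCompact_closure.ultrafilter_le_nhds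
        (U.map fun F => Z F t - Z F a) <| le_principal_iff.mpr <|
        ((hmem a).and (hmem t)).mono fun F hF => subset_closure (hZ F a hF.1 t hF.2 ht.1)
      exact ⟨y, fun _ => hy⟩
    · exact ⟨0, fun h => absurd h ht⟩
  choose Y hY using hlim
  refine ⟨Y, fun s hs t ht hst => ?_⟩
  refine mem_closure_of_tendsto ((hY t ht).sub (hY s hs)) ?_
  filter_upwards [hmem s, hmem t] with F hsF htF
  rw [sub_sub_sub_cancel_right]
  exact hZ F s hsF t htF hst

end WeakPrimitive

section Smallness

variable {p q q' : ℝ}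

theorem exists_gt_one_lt_one_div_add (hq : 1 < q) (hpq : 1 < 1 / p + 1 / q) :
    ∃ q' > q, 1 < 1 / p + 1 / q' := by
  have hq0 : 0 < 1 / q := by positivity
  obtain ⟨r, hr, hrq⟩ := exists_between (max_lt hq0 (by linarith : 1 - 1 / p < 1 / q))
  have hr0 : 0 < r := (le_max_left _ _).trans_lt hr
  refine ⟨1 / r, (lt_one_div (by positivity) hr0).mpr hrq, ?_⟩
  rw [one_div_one_div]
  linarith [le_max_right 0 (1 - 1 / p)]

theorem youngBound_le {α R E : Type*} [LinearOrder α] [SeminormedRing R]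
    [SeminormedAddCommGroup E] {f : α → R} {g : α → E} {s : Set α} (hq : 1 < q) (hqq' : q ≤ q')
    (hg : ePVariationOn g q s ≠ ⊤) :
    youngBound f g p q' s ≤
      youngConst p q' *
        (Metric.diam (f '' s) ^ (1 + p / q' - p) * Metric.diam (g '' s) ^ (1 - q / q')) *
          ((ePVariationOn f p s).toReal + (ePVariationOn g q s).toReal) := by
  set V := (ePVariationOn f p s).toReal
  set W := (ePVariationOn g q s).toReal
  have hV : 0 ≤ V := ENNReal.toReal_nonneg
  have hW : 0 ≤ W := ENNReal.toReal_nonneg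
  have hC := youngConst_pos p q'
  have hq' : 1 < q' := hq.trans_le hqq'
  have hinv : 0 ≤ 1 - 1 / q' := sub_nonneg.mpr ((div_le_one (by positivity)).mpr hq'.le)
  have hmean : V ^ (1 - 1 / q') * W ^ (1 / q') ≤ V + W := by
    refine (Real.geom_mean_le_arith_mean2_weighted hinv (by positivity) hV hW
      (sub_add_cancel _ _)).trans (add_le_add ?_ ?_)
    · exact mul_le_of_le_one_left hV (sub_le_self _ (by positivity))
    · exact mul_le_of_le_one_left hW (sub_nonneg.mp hinv)
  have hgq' : (ePVariationOn g q' s).toReal ^ (1 / q') ≤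
      Metric.diam (g '' s) ^ (1 - q / q') * W ^ (1 / q') := by
    calc (ePVariationOn g q' s).toReal ^ (1 / q')
        ≤ (Metric.diam (g '' s) ^ (q' - q) * W) ^ (1 / q') := by
          gcongr
          exact ePVariationOn.toReal_le_diam_rpow_mul (by positivity) hqq' hg
      _ = Metric.diam (g '' s) ^ (1 - q / q') * W ^ (1 / q') := by
          rw [Real.mul_rpow (Real.rpow_nonneg Metric.diam_nonneg _) hW,
            ← Real.rpow_mul Metric.diam_nonneg, mul_one_div, sub_div,
            div_self (by positivity)]
  calc youngBound f g p q' s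
      ≤ youngConst p q' * V ^ (1 - 1 / q') * Metric.diam (f '' s) ^ (1 + p / q' - p) *
          (Metric.diam (g '' s) ^ (1 - q / q') * W ^ (1 / q')) := by
        unfold youngBound
        gcongr
    _ = youngConst p q' *
          (Metric.diam (f '' s) ^ (1 + p / q' - p) * Metric.diam (g '' s) ^ (1 - q / q')) *
            (V ^ (1 - 1 / q') * W ^ (1 / q')) := by ring
    _ ≤ _ := by gcongr

variable {X E F : Type*} [PseudoMetricSpace E] [PseudoMetricSpace F] {f : X → E} {g : X → F}

theorem tendsto_diam_image_smallSets {l : Filter X} {y : E} (hf : Tendsto f l (𝓝 y)) :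
    Tendsto (fun s => Metric.diam (f '' s)) l.smallSets (𝓝 0) := by
  refine tendsto_order.mpr ⟨fun ε hε => .of_forall fun s => hε.trans_le Metric.diam_nonneg,
    fun ε hε => ?_⟩
  have hε4 : 0 < ε / 4 := by positivity
  refine eventually_smallSets.mpr ⟨_, hf (Metric.ball_mem_nhds y hε4), fun s hs => ?_⟩
  calc Metric.diam (f '' s) ≤ Metric.diam (Metric.ball y (ε / 4)) :=
        Metric.diam_mono (image_subset_iff.mpr hs) Metric.isBounded_ball
    _ ≤ 2 * (ε / 4) := Metric.diam_ball hε4.le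
    _ < ε := by linarith

theorem tendsto_diam_rpow_mul_smallSets {l : Filter X} {y : E} {K : Set X} (hK : K ∈ l)
    (hf : Tendsto f l (𝓝 y)) (hg : Bornology.IsBounded (g '' K)) {r₁ r₂ : ℝ} (hr₁ : 0 < r₁)
    (hr₂ : 0 ≤ r₂) :
    Tendsto (fun s => Metric.diam (f '' s) ^ r₁ * Metric.diam (g '' s) ^ r₂) l.smallSets
      (𝓝 0) := by
  have hlim := ((tendsto_diam_image_smallSets hf).rpow_const (Or.inr hr₁.le)).mul_const
    (Metric.diam (g '' K) ^ r₂)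
  rw [Real.zero_rpow hr₁.ne', zero_mul] at hlim
  refine squeeze_zero' (.of_forall fun s => by positivity) ?_ hlim
  filter_upwards [eventually_smallSets_subset.mpr hK] with s hs
  gcongr
  exact Metric.diam_mono (image_mono hs) hg

theorem exists_forall_diam_rpow_mul_lt [PseudoMetricSpace X] {K : Set X} (hK : IsCompact K)
    (hf : Bornology.IsBounded (f '' K)) (hg : Bornology.IsBounded (g '' K))
    (hfg : ∀ x ∈ K, ContinuousWithinAt f K x ∨ ContinuousWithinAt g K x) {r₁ r₂ ε : ℝ}
    (hr₁ : 0 < r₁) (hr₂ : 0 < r₂) (hε : 0 < ε) :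
    ∃ δ > 0, ∀ x ∈ K, ∀ s ⊆ Metric.ball x δ ∩ K,
      Metric.diam (f '' s) ^ r₁ * Metric.diam (g '' s) ^ r₂ < ε := by
  have hlocal (x : X) (hx : x ∈ K) : ∃ U ∈ 𝓝[K] x, ∀ s ⊆ U,
      Metric.diam (f '' s) ^ r₁ * Metric.diam (g '' s) ^ r₂ < ε := by
    refine eventually_smallSets.mp (Tendsto.eventually_lt_const hε ?_)
    rcases hfg x hx with hfx | hgx
    · exact tendsto_diam_rpow_mul_smallSets self_mem_nhdsWithin hfx hg hr₁ hr₂.le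
    · simpa only [mul_comm] using
        tendsto_diam_rpow_mul_smallSets self_mem_nhdsWithin hgx hf hr₂ hr₁.le
  choose U hU hUε using hlocal
  obtain ⟨δ, hδ, hball⟩ := Metric.uniformity_basis_dist.lebesgue_number_lemma_nhdsWithin' hK hU
  refine ⟨δ, hδ, fun x hx s hs => ?_⟩
  obtain ⟨y, hy⟩ := hball x hx
  refine hUε y y.2 s (hs.trans (Subset.trans ?_ hy))
  exact inter_subset_inter_left K fun z hz => by simpa [UniformSpace.ball, dist_comm] using hz

end Smallness

section RiemannStieltjes

theorem exists_forall_norm_sub_le {R E : Type*} [SeminormedRing R] [SeminormedAddCommGroup E]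
    [Module R E] [IsBoundedSMul R E] {f : ℝ → R} {g Y : ℝ → E} {p q a b : ℝ} (hq : 1 < q)
    (hpq : 1 < 1 / p + 1 / q) (hf : ePVariationOn f p (Icc a b) ≠ ⊤)
    (hg : ePVariationOn g q (Icc a b) ≠ ⊤)
    (hfg : ∀ x ∈ Icc a b,
      ContinuousWithinAt f (Icc a b) x ∨ ContinuousWithinAt g (Icc a b) x)
    (hY : ∀ s ∈ Icc a b, ∀ t ∈ Icc a b, s ≤ t → Y t - Y s ∈ closure (leftRiemannSums f g s t))
    {ε : ℝ} (hε : 0 < ε) :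
    ∃ δ > 0, ∀ s ∈ Icc a b, ∀ t ∈ Icc a b, s ≤ t → t - s < δ → ∀ c ∈ Icc s t,
      ‖Y t - Y s - f c • (g t - g s)‖ ≤
        ε * ((ePVariationOn f p (Icc s t)).toReal + (ePVariationOn g q (Icc s t)).toReal) := by
  obtain ⟨q', hqq', hpq'⟩ := exists_gt_one_lt_one_div_add hq hpq
  have hp := pos_of_one_lt_one_div_add hq hpq
  have hq0 : 0 < q := by positivity
  have hq' : 1 < q' := hq.trans hqq'
  have hC := youngConst_pos p q'
  obtain ⟨δ, hδ, hsmall⟩ := exists_forall_diam_rpow_mul_lt isCompact_Icc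
    (ePVariationOn.isBounded_image hp hf) (ePVariationOn.isBounded_image hq0 hg) hfg
    (one_add_div_sub_pos hq' hpq') (sub_pos.mpr ((div_lt_one (by positivity)).mpr hqq'))
    (div_pos hε hC)
  refine ⟨δ, hδ, fun s hs t ht hst hδst c hc => ?_⟩
  have hsub : Icc s t ⊆ Icc a b := Icc_subset_Icc hs.1 ht.2
  have hf' := ne_top_of_le_ne_top hf (ePVariationOn.mono f p hsub)
  have hg' := ne_top_of_le_ne_top hg (ePVariationOn.mono g q hsub)
  have hball : Icc s t ⊆ Metric.ball s δ ∩ Icc a b := fun x hx =>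
    ⟨by rw [Metric.mem_ball, Real.dist_eq, abs_of_nonneg] <;> linarith [hx.1, hx.2], hsub hx⟩
  have hmem := closure_minimal (leftRiemannSums_subset_closedBall hq' hpq' hf'
    (ePVariationOn.ne_top_of_le hq0 hqq'.le hg') hc) Metric.isClosed_closedBall (hY s hs t ht hst)
  refine (mem_closedBall_iff_norm.mp hmem).trans ((youngBound_le hq hqq'.le hg').trans ?_)
  gcongr
  rw [mul_comm, ← le_div_iff₀ hC]
  exact (hsmall s hs _ hball).le

theorem rsIntegral_of_forall_abs_sub_le {f g Y : ℝ → ℝ} {a b M : ℝ} {ω : ℝ → ℝ → ℝ}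
    (hω : ∀ (n : ℕ) (u : ℕ → ℝ), Monotone u → a ≤ u 0 → u n ≤ b →
      ∑ i ∈ Finset.range n, ω (u i) (u (i + 1)) ≤ M)
    (hY : ∀ ε > 0, ∃ δ > 0, ∀ s ∈ Icc a b, ∀ t ∈ Icc a b, s ≤ t → t - s < δ → ∀ c ∈ Icc s t,
      |Y t - Y s - f c * (g t - g s)| ≤ ε * ω s t) :
    ∀ t ∈ Icc a b, RSIntegral f g a t (Y t - Y a) := by
  intro t ht ε hε
  have hM : 0 ≤ M := by simpa using hω 0 (fun _ => a) monotone_const le_rfl (ht.1.trans ht.2)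
  have hεM : 0 < ε / (M + 1) := by positivity
  obtain ⟨δ, hδ, hYδ⟩ := hY (ε / (M + 1)) hεM
  refine ⟨δ, hδ, fun n τ ξ hτ hτ0 hτn hξ hτδ => ?_⟩
  obtain ⟨u, hu, huτ⟩ := exists_monotone_extension_fin hτ.monotone
  have hu0 : u 0 = a := hτ0 ▸ huτ 0
  have hun : u n = t := hτn ▸ huτ (Fin.last n)
  simp only [← huτ, Fin.val_succ, Fin.val_castSucc] at hξ hτδ ⊢
  have htelescope : Y t - Y a = ∑ i : Fin n, (Y (u (i + 1)) - Y (u i)) := by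
    rw [Fin.sum_univ_eq_sum_range fun i => Y (u (i + 1)) - Y (u i),
      Finset.sum_range_sub fun i => Y (u i), hu0, hun]
  have hmem (i : ℕ) (hi : i ≤ n) : u i ∈ Icc a b :=
    ⟨hu0 ▸ hu i.zero_le, (hu hi).trans (hun ▸ ht.2)⟩
  rw [abs_sub_comm, htelescope, ← Finset.sum_sub_distrib]
  calc |∑ i : Fin n, (Y (u (i + 1)) - Y (u i) - f (ξ i) * (g (u (i + 1)) - g (u i)))|
      ≤ ∑ i : Fin n, ε / (M + 1) * ω (u i) (u (i + 1)) :=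
        (Finset.abs_sum_le_sum_abs _ _).trans <| Finset.sum_le_sum fun i _ =>
          hYδ _ (hmem i i.2.le) _ (hmem (i + 1) i.2) (hu i.val.le_succ) (hτδ i) _ (hξ i)
    _ = ε / (M + 1) * ∑ i ∈ Finset.range n, ω (u i) (u (i + 1)) := by
        rw [← Finset.mul_sum, Fin.sum_univ_eq_sum_range fun i => ω (u i) (u (i + 1))]
    _ ≤ ε / (M + 1) * M := by
        gcongr
        exact hω n u hu hu0.ge (hun ▸ ht.2)
    _ < ε := by
        rw [div_mul_eq_mul_div, div_lt_iff₀ (by positivity)]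
        linarith

end RiemannStieltjes

section IndefiniteIntegral

theorem toReal_ePVariationOn_rpow_le_of_sub_mem_closure {α R E : Type*} [LinearOrder α]
    [SeminormedRing R] [SeminormedAddCommGroup E] [Module R E] [IsBoundedSMul R E] {f : α → R}
    {g Y : α → E} {p q M : ℝ} {a b : α} (hq : 1 < q) (hpq : 1 < 1 / p + 1 / q)
    (hf : ePVariationOn f p (Icc a b) ≠ ⊤) (hg : ePVariationOn g q (Icc a b) ≠ ⊤)
    (hY : ∀ s ∈ Icc a b, ∀ t ∈ Icc a b, s ≤ t → Y t - Y s ∈ closure (leftRiemannSums f g s t))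
    (hM : 0 ≤ M) (hfM : ∀ x ∈ Icc a b, ‖f x‖ ≤ M) :
    (ePVariationOn Y q (Icc a b)).toReal ^ (1 / q) ≤
      (youngConst p q * (ePVariationOn f p (Icc a b)).toReal ^ (1 - 1 / q) *
          Metric.diam (f '' Icc a b) ^ (1 + p / q - p) + M) *
        (ePVariationOn g q (Icc a b)).toReal ^ (1 / q) := by
  have hp := pos_of_one_lt_one_div_add hq hpq
  have hq0 : 0 < q := by positivity
  have hq1 : 0 ≤ 1 - 1 / q := sub_nonneg.mpr ((div_le_one hq0).mpr hq.le)
  have hr := one_add_div_sub_pos hq hpq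
  have hC := youngConst_pos p q
  refine ePVariationOn.toReal_rpow_le_mul_of_dist_le hq0 hg (by positivity)
    fun s t has hst htb => ?_
  have hsub : Icc s t ⊆ Icc a b := Icc_subset_Icc has htb
  have hs : s ∈ Icc a b := hsub (left_mem_Icc.mpr hst)
  have ht : t ∈ Icc a b := hsub (right_mem_Icc.mpr hst)
  have hfst := ePVariationOn.mono f p hsub
  have hgst := ne_top_of_le_ne_top hg (ePVariationOn.mono g q hsub)
  have hmem := closure_minimal (leftRiemannSums_subset_closedBall hq hpq
    (ne_top_of_le_ne_top hf hfst) hgst (left_mem_Icc.mpr hst)) Metric.isClosed_closedBall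
    (hY s hs t ht hst)
  calc dist (Y t) (Y s) = ‖Y t - Y s‖ := dist_eq_norm _ _
    _ ≤ ‖f s • (g t - g s)‖ + youngBound f g p q (Icc s t) := norm_le_of_mem_closedBall hmem
    _ ≤ M * (ePVariationOn g q (Icc s t)).toReal ^ (1 / q) +
          youngConst p q * (ePVariationOn f p (Icc a b)).toReal ^ (1 - 1 / q) *
            Metric.diam (f '' Icc a b) ^ (1 + p / q - p) *
              (ePVariationOn g q (Icc s t)).toReal ^ (1 / q) := by
        refine add_le_add ((norm_smul_le _ _).trans ?_) ?_
        · rw [← dist_eq_norm]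
          gcongr
          · exact hfM s hs
          · exact ePVariationOn.dist_le hq0 hgst (right_mem_Icc.mpr hst) (left_mem_Icc.mpr hst)
        · unfold youngBound
          gcongr
          exact Metric.diam_mono (image_mono hsub) (ePVariationOn.isBounded_image hp hf)
    _ = _ := by ring

theorem diam_image_Icc_le_oscNorm {f : ℝ → ℝ} {a b : ℝ}
    (hf : Bornology.IsBounded (f '' Icc a b)) : Metric.diam (f '' Icc a b) ≤ oscNorm f a b := by
  have hbdd : BddAbove {x | ∃ s ∈ Icc a b, ∃ t ∈ Icc a b, s < t ∧ x = |f t - f s|} := by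
    refine ⟨Metric.diam (f '' Icc a b), ?_⟩
    rintro _ ⟨s, hs, t, ht, -, rfl⟩
    exact Metric.dist_le_diam_of_mem hf (mem_image_of_mem f ht) (mem_image_of_mem f hs)
  have hosc : 0 ≤ oscNorm f a b :=
    Real.sSup_nonneg fun _ ⟨_, _, _, _, _, hx⟩ => hx ▸ abs_nonneg _
  refine Metric.diam_le_of_forall_dist_le hosc ?_
  rintro _ ⟨s, hs, rfl⟩ _ ⟨t, ht, rfl⟩
  rcases lt_trichotomy s t with hst | rfl | hts
  · rw [dist_comm]
    exact le_csSup hbdd ⟨s, hs, t, ht, hst, rfl⟩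
  · rwa [dist_self]
  · exact le_csSup hbdd ⟨t, ht, s, hs, hts, rfl⟩

theorem supNorm_nonneg (f : ℝ → ℝ) (a b : ℝ) : 0 ≤ supNorm f a b :=
  Real.sSup_nonneg fun _ ⟨_, _, hx⟩ => hx ▸ abs_nonneg _

theorem abs_le_supNorm {f : ℝ → ℝ} {a b x : ℝ} (hf : Bornology.IsBounded (f '' Icc a b))
    (hx : x ∈ Icc a b) : |f x| ≤ supNorm f a b := by
  obtain ⟨B, hB⟩ := hf.exists_norm_le
  refine le_csSup ⟨B, ?_⟩ ⟨x, hx, rfl⟩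
  rintro _ ⟨t, ht, rfl⟩
  exact hB _ (mem_image_of_mem f ht)

theorem pVarNorm_rpow (f : ℝ → ℝ) {p : ℝ} (hp : p ≠ 0) (a b r : ℝ) :
    pVarNorm f p a b ^ (p * r) = (pVar f p a b).toReal ^ r := by
  rw [pVarNorm, ← Real.rpow_mul ENNReal.toReal_nonneg, ← mul_assoc, one_div_mul_cancel hp, one_mul]

theorem pVarNorm_sub_const (f : ℝ → ℝ) (p a b c : ℝ) :
    pVarNorm (fun t => f t - c) p a b = pVarNorm f p a b := by
  simp only [pVarNorm, pVar, sub_sub_sub_cancel_right]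

theorem pVarNorm_le_of_sub_mem_closure {f g Y : ℝ → ℝ} {p q a b : ℝ} (hq : 1 < q)
    (hpq : 1 < 1 / p + 1 / q) (hf : pVar f p a b ≠ ⊤) (hg : pVar g q a b ≠ ⊤)
    (hY : ∀ s ∈ Icc a b, ∀ t ∈ Icc a b, s ≤ t → Y t - Y s ∈ closure (leftRiemannSums f g s t)) :
    pVarNorm Y q a b ≤
      (youngConst p q * pVarNorm f p a b ^ (p - p / q) * oscNorm f a b ^ (1 + p / q - p)
          + supNorm f a b) * pVarNorm g q a b := by
  have hp := pos_of_one_lt_one_div_add hq hpq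
  have hq0 : 0 < q := by positivity
  have hr := one_add_div_sub_pos hq hpq
  have hC := youngConst_pos p q
  rw [show p - p / q = p * (1 - 1 / q) by ring, pVarNorm_rpow f hp.ne']
  simp only [pVarNorm, pVar_eq_ePVariationOn _ hp, pVar_eq_ePVariationOn _ hq0] at hf hg ⊢
  have hbdd := ePVariationOn.isBounded_image hp hf
  refine (toReal_ePVariationOn_rpow_le_of_sub_mem_closure hq hpq hf hg hY (supNorm_nonneg f a b)
    fun x hx => abs_le_supNorm hbdd hx).trans ?_
  gcongr
  exact diam_image_Icc_le_oscNorm hbdd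

theorem exists_sub_mem_closure_leftRiemannSums {α R E : Type*} [LinearOrder α] [Nonempty α]
    [SeminormedRing R] [SeminormedAddCommGroup E] [ProperSpace E] [Module R E]
    [IsBoundedSMul R E] {f : α → R} {g : α → E} {p q : ℝ} {a b : α} (hq : 1 < q)
    (hpq : 1 < 1 / p + 1 / q) (hf : ePVariationOn f p (Icc a b) ≠ ⊤)
    (hg : ePVariationOn g q (Icc a b) ≠ ⊤) :
    ∃ Y : α → E, ∀ s ∈ Icc a b, ∀ t ∈ Icc a b, s ≤ t →
      Y t - Y s ∈ closure (leftRiemannSums f g s t) := by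
  refine exists_sub_mem_closure (fun t ht => ?_) (exists_sub_mem_leftRiemannSums f g)
  have hsub : Icc a t ⊆ Icc a b := Icc_subset_Icc_right ht.2
  exact Metric.isBounded_closedBall.subset <| leftRiemannSums_subset_closedBall hq hpq
    (ne_top_of_le_ne_top hf (ePVariationOn.mono f p hsub))
    (ne_top_of_le_ne_top hg (ePVariationOn.mono g q hsub)) (left_mem_Icc.mpr ht.1)

theorem rsIntegral_of_sub_mem_closure {f g Y : ℝ → ℝ} {p q a b : ℝ} (hq : 1 < q)
    (hpq : 1 < 1 / p + 1 / q) (hf : ePVariationOn f p (Icc a b) ≠ ⊤)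
    (hg : ePVariationOn g q (Icc a b) ≠ ⊤) (hfg : NoCommonDiscont f g a b)
    (hY : ∀ s ∈ Icc a b, ∀ t ∈ Icc a b, s ≤ t → Y t - Y s ∈ closure (leftRiemannSums f g s t)) :
    ∀ t ∈ Icc a b, RSIntegral f g a t (Y t - Y a) := by
  refine rsIntegral_of_forall_abs_sub_le
    (M := (ePVariationOn f p (Icc a b)).toReal + (ePVariationOn g q (Icc a b)).toReal)
    (fun n u hu ha hb => ?_) fun ε hε => exists_forall_norm_sub_le hq hpq hf hg hfg hY hε
  rw [Finset.sum_add_distrib]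
  exact add_le_add (ePVariationOn.sum_toReal_Icc_le hf hu ha hb)
    (ePVariationOn.sum_toReal_Icc_le hg hu ha hb)

end IndefiniteIntegral

theorem indefinite_rs_integral_qvar_bound_general {p q : ℝ} (hq : 1 < q)
    (hpq : 1 < 1 / p + 1 / q) :
    ∃ C : ℝ, 0 < C ∧ ∀ (a b : ℝ) (f g : ℝ → ℝ),
      NoCommonDiscont f g a b → pVar f p a b < ⊤ → pVar g q a b < ⊤ →
      ∃ Y : ℝ → ℝ, (∀ t ∈ Icc a b, RSIntegral f g a t (Y t)) ∧
        pVarNorm Y q a b ≤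
          (C * pVarNorm f p a b ^ (p - p / q) * oscNorm f a b ^ (1 + p / q - p)
              + supNorm f a b) * pVarNorm g q a b := by
  refine ⟨youngConst p q, youngConst_pos p q, fun a b f g hfg hf hg => ?_⟩
  have hf' := pVar_eq_ePVariationOn f (pos_of_one_lt_one_div_add hq hpq) a b ▸ hf.ne
  have hg' := pVar_eq_ePVariationOn g (zero_lt_one.trans hq) a b ▸ hg.ne
  obtain ⟨Y, hY⟩ := exists_sub_mem_closure_leftRiemannSums hq hpq hf' hg'
  refine ⟨fun t => Y t - Y a, rsIntegral_of_sub_mem_closure hq hpq hf' hg' hfg hY, ?_⟩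
  rw [pVarNorm_sub_const]
  exact pVarNorm_le_of_sub_mem_closure hq hpq hf.ne hg.ne hY

/-- Remark 5 (first estimate): `q`-variation bound for the indefinite
Riemann–Stieltjes integral `t ↦ ∫_a^t f dg`. -/
theorem indefinite_rs_integral_qvar_bound
    (p q : ℝ) (hp : 1 < p) (hq : 1 < q) (hpq : 1 / p + 1 / q > 1) :
    ∃ C : ℝ, 0 < C ∧ ∀ (a b : ℝ), a < b → ∀ f g : ℝ → ℝ,
      NoCommonDiscont f g a b → pVar f p a b < ⊤ → pVar g q a b < ⊤ →
      ∃ Y : ℝ → ℝ, (∀ t ∈ Set.Icc a b, RSIntegral f g a t (Y t)) ∧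
        pVarNorm Y q a b ≤
          (C * pVarNorm f p a b ^ (p - p / q) * oscNorm f a b ^ (1 + p / q - p)
              + supNorm f a b) * pVarNorm g q a b := by
  obtain ⟨C, hC, h⟩ := indefinite_rs_integral_qvar_bound_general hq hpq
  exact ⟨C, hC, fun a b _ => h a b⟩
end

section
/- Let p ∈ (1;2), let a < b, let y₀ ∈ ℝ, let x : [a;b] → ℝ be continuous with finite p-variation, and let F : ℝ → ℝ be globally α-Lipschitz with p − 1 < α < 1, i.e. there is K ≥ 0 with |F(u) − F(v)| ≤ K·|u − v|^α for all u, v ∈ ℝ. Then there exists a function y : [a;b] → ℝ of finite p-variation such that for every t ∈ [a;b] the Riemann–Stieltjes integral ∫_a^t F(y(s)) dx(s) exists and y(t) = y₀ + ∫_a^t F(y(s)) dx(s). -/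
open Filter Set

/-!
Choose `q` with `p < q < min (1 + α) (p * (1 + α))` and let `V` be a function whose increments
dominate `|x t - x s| ^ p`. The control `ω s t = osc(x, [s;t]) ^ (q - p) * (V t - V s)` is
superadditive, small on short intervals, and satisfies `|x t - x s| ≤ ω s t ^ (1 / q)`. Cutting a
grid at a cell that leaves at most half of `ω` on either side shows by induction that Euler schemes
satisfy the Davie estimate `‖y t - y s - (x t - x s) • F (y s)‖ ≤ M * ω s t ^ ((1 + α) / q)` with
`M` independent of the grid, so by compactness some `y` on `[a;b]` satisfies all these estimates. As
`(1 + α) / q > 1`, they force the Riemann sums to converge to the increments of `y`; as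
`(1 + α) / q ≥ 1 / p`, they also give `y` finite `p`-variation.
-/

open scoped NNReal

theorem rpow_le_rpow_sub_mul_rpow {w W r e : ℝ} (hw : 0 ≤ w) (hwW : w ≤ W) (hr : 0 ≤ r)
    (hre : r ≤ e) : w ^ e ≤ W ^ (e - r) * w ^ r := by
  calc w ^ e = w ^ (e - r) * w ^ r := by
        rw [← Real.rpow_add_of_nonneg hw (sub_nonneg.2 hre) hr, sub_add_cancel]
    _ ≤ W ^ (e - r) * w ^ r := by
        have := sub_nonneg.2 hre
        gcongr

theorem exists_pos_forall_mul_rpow_lt (c : ℝ) {e ε : ℝ} (he : 0 < e) (hε : 0 < ε) :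
    ∃ η > 0, ∀ w, 0 ≤ w → w ≤ η → c * w ^ e < ε := by
  have hcont : Continuous fun w : ℝ => c * w ^ e :=
    continuous_const.mul (Real.continuous_rpow_const he.le)
  have hlim : Tendsto (fun w : ℝ => c * w ^ e) (nhds 0) (nhds 0) := by
    simpa [Real.zero_rpow he.ne'] using hcont.tendsto 0
  obtain ⟨δ, hδ, hball⟩ := Metric.eventually_nhds_iff.1 (hlim.eventually_lt_const hε)
  refine ⟨δ / 2, half_pos hδ, fun w hw hwδ => hball ?_⟩
  rw [Real.dist_0_eq_abs, abs_of_nonneg hw]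
  linarith

theorem holderWith_of_dist_le {X Y : Type*} [PseudoMetricSpace X] [PseudoMetricSpace Y]
    {C r : ℝ≥0} {f : X → Y} (hf : ∀ u v, dist (f u) (f v) ≤ C * dist u v ^ (r : ℝ)) :
    HolderWith C r f := fun u v => by
  rw [edist_dist, edist_dist, ENNReal.ofReal_rpow_of_nonneg dist_nonneg r.coe_nonneg,
    ← ENNReal.ofReal_coe_nnreal, ← ENNReal.ofReal_mul C.coe_nonneg]
  exact ENNReal.ofReal_le_ofReal (hf u v)

theorem sum_succ_sub_castSucc {M : Type*} [AddCommGroup M] {n : ℕ} (f : Fin (n + 1) → M) :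
    ∑ i : Fin n, (f i.succ - f i.castSucc) = f (Fin.last n) - f 0 := by
  have h := (Fin.sum_univ_succ f).symm.trans (Fin.sum_univ_castSucc f)
  rw [Finset.sum_sub_distrib, sub_eq_sub_iff_add_eq_add, add_comm, h, add_comm]

/-- A control: a nonnegative superadditive function of the interval `[s;t]`. Only its values at
pairs `s ≤ t` matter; continuity on the diagonal is not part of the definition. -/
structure IsControl {ι : Type*} [Preorder ι] (ω : ι → ι → ℝ) : Prop where
  nonneg : ∀ ⦃s t⦄, s ≤ t → 0 ≤ ω s t
  add_le : ∀ ⦃s u t⦄, s ≤ u → u ≤ t → ω s u + ω u t ≤ ω s t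

namespace IsControl

section Preorder

variable {ι κ : Type*} [Preorder ι] [Preorder κ] {ω : ι → ι → ℝ}

theorem mono (hω : IsControl ω) {s s' t' t : ι} (hs : s ≤ s') (hst : s' ≤ t') (ht : t' ≤ t) :
    ω s' t' ≤ ω s t := by
  linarith [hω.add_le hs (hst.trans ht), hω.add_le hst ht, hω.nonneg hs, hω.nonneg ht]

theorem le_bot_top [BoundedOrder ι] (hω : IsControl ω) {s t : ι} (hst : s ≤ t) :
    ω s t ≤ ω ⊥ ⊤ :=
  hω.mono bot_le hst le_top

theorem self_eq_zero (hω : IsControl ω) (s : ι) : ω s s = 0 := by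
  linarith [hω.add_le (le_refl s) (le_refl s), hω.nonneg (le_refl s)]

theorem comp (hω : IsControl ω) {e : κ → ι} (he : Monotone e) :
    IsControl fun s t => ω (e s) (e t) where
  nonneg _ _ hst := hω.nonneg (he hst)
  add_le _ _ _ hsu hut := hω.add_le (he hsu) (he hut)

theorem of_monotone {V : ι → ℝ} (hV : Monotone V) : IsControl fun s t => V t - V s where
  nonneg _ _ hst := sub_nonneg.2 (hV hst)
  add_le _ _ _ _ _ := by linarith

theorem mul_left (hω : IsControl ω) {μ : ι → ι → ℝ} (hμ₀ : ∀ s t, 0 ≤ μ s t)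
    (hμ : ∀ ⦃s s' t' t⦄, s ≤ s' → t' ≤ t → μ s' t' ≤ μ s t) :
    IsControl fun s t => μ s t * ω s t where
  nonneg s t hst := mul_nonneg (hμ₀ s t) (hω.nonneg hst)
  add_le s u t hsu hut := calc
    μ s u * ω s u + μ u t * ω u t ≤ μ s t * ω s u + μ s t * ω u t :=
      add_le_add (mul_le_mul_of_nonneg_right (hμ le_rfl hut) (hω.nonneg hsu))
        (mul_le_mul_of_nonneg_right (hμ hsu le_rfl) (hω.nonneg hut))
    _ = μ s t * (ω s u + ω u t) := (mul_add ..).symm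
    _ ≤ μ s t * ω s t := mul_le_mul_of_nonneg_left (hω.add_le hsu hut) (hμ₀ s t)

theorem sum_le (hω : IsControl ω) {n : ℕ} {t : Fin (n + 1) → ι} (ht : Monotone t) :
    ∑ i : Fin n, ω (t i.castSucc) (t i.succ) ≤ ω (t 0) (t (Fin.last n)) := by
  induction n with
  | zero => simpa using hω.nonneg (le_refl (t 0))
  | succ n ih =>
    rw [Fin.sum_univ_castSucc]
    calc _ ≤ ω (t 0) (t (Fin.last n).castSucc) + ω (t (Fin.last n).castSucc) (t (Fin.last _)) :=
          add_le_add_left (ih (ht.comp Fin.strictMono_castSucc.monotone)) _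
      _ ≤ _ := hω.add_le (ht (Fin.zero_le _)) (ht (Fin.le_last _))

end Preorder

section FiniteGrid

variable {κ : Type*} [LinearOrder κ] [Finite κ] {ω : κ → κ → ℝ}

theorem exists_covBy_le_half (hω : IsControl ω) {s t : κ} (hst : s < t) :
    ∃ u u', s ≤ u ∧ u ⋖ u' ∧ u' ≤ t ∧ ω s u ≤ ω s t / 2 ∧ ω u' t ≤ ω s t / 2 := by
  have hhalf : 0 ≤ ω s t / 2 := by linarith [hω.nonneg hst.le]
  obtain ⟨u, ⟨hsu, hut, hωu⟩, hmax⟩ :=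
    (Set.toFinite {v | s ≤ v ∧ v < t ∧ ω s v ≤ ω s t / 2}).exists_maximal
      ⟨s, le_rfl, hst, (hω.self_eq_zero s).trans_le hhalf⟩
  obtain ⟨u', huu', hut'⟩ := exists_covBy_le_of_lt hut
  refine ⟨u, u', hsu, huu', hut', hωu, ?_⟩
  rcases hut'.eq_or_lt with rfl | hlt
  · rwa [hω.self_eq_zero]
  · have hωu' : ω s t / 2 < ω s u' := by
      by_contra! hle
      exact huu'.lt.not_ge (hmax ⟨hsu.trans huu'.le, hlt, hle⟩ huu'.le)
    linarith [hω.add_le (hsu.trans huu'.le) hut']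

theorem halving_induction (hω : IsControl ω) {P : κ → κ → Prop} (refl : ∀ s, P s s)
    (bisect : ∀ ⦃s u u' t⦄, s ≤ u → u ⋖ u' → u' ≤ t → ω s u ≤ ω s t / 2 → ω u' t ≤ ω s t / 2 →
      P s u → P u' t → P s t) {s t : κ} (hst : s ≤ t) : P s t := by
  induction hn : (Icc s t).ncard using Nat.strong_induction_on generalizing s t with
  | _ n ih =>
    rcases hst.eq_or_lt with rfl | hlt
    · exact refl s
    obtain ⟨u, u', hsu, huu', hut', hωu, hωu'⟩ := hω.exists_covBy_le_half hlt
    have hut : u < t := huu'.lt.trans_le hut'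
    have hsu' : s < u' := hsu.trans_lt huu'.lt
    refine bisect hsu huu' hut' hωu hωu' (ih _ ?_ hsu rfl) (ih _ ?_ hut' rfl)
    · exact hn ▸ Set.ncard_lt_ncard (Icc_ssubset_Icc_right hst le_rfl hut)
    · exact hn ▸ Set.ncard_lt_ncard (Icc_ssubset_Icc_left hst hsu' le_rfl)

end FiniteGrid

end IsControl

section Remainder

variable {E ι : Type*} [NormedAddCommGroup E] [NormedSpace ℝ E]

/-- The error of one explicit Euler step for `dy = F(y) dx` over `[s;t]`. -/
def eulerRemainder (F : E → E) (x : ι → ℝ) (y : ι → E) (s t : ι) : E :=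
  y t - y s - (x t - x s) • F (y s)

/-- The Euler scheme for `dy = F(y) dx` on a discrete order: it is exact on each grid cell. -/
def IsEulerScheme [Preorder ι] (F : E → E) (x : ι → ℝ) (y : ι → E) : Prop :=
  ∀ ⦃u u'⦄, u ⋖ u' → eulerRemainder F x y u u' = 0

/-- A solution of `dy = F(y) dx` in the sense of Davie, relative to a control `ω`: the error of
an Euler step is `O(ω ^ θ)`. It solves the integral equation when `1 < θ`. -/
def IsDavieSolution [Preorder ι] (F : E → E) (x : ι → ℝ) (ω : ι → ι → ℝ) (θ M : ℝ)
    (y : ι → E) : Prop :=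
  ∀ ⦃s t⦄, s ≤ t → ‖eulerRemainder F x y s t‖ ≤ M * ω s t ^ θ

variable {F : E → E} {x : ι → ℝ} {y : ι → E} {K α : ℝ≥0} {γ w G : ℝ} {s t : ι}

theorem eulerRemainder_self (s : ι) : eulerRemainder F x y s s = 0 := by
  simp [eulerRemainder]

theorem eulerRemainder_eq_add (F : E → E) (x : ι → ℝ) (y : ι → E) (s u t : ι) :
    eulerRemainder F x y s t = eulerRemainder F x y s u + eulerRemainder F x y u t +
      (x t - x u) • (F (y u) - F (y s)) := by
  simp only [eulerRemainder]
  module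

theorem norm_sub_le_norm_eulerRemainder_add (F : E → E) (x : ι → ℝ) (y : ι → E) (s t : ι) :
    ‖y t - y s‖ ≤ ‖eulerRemainder F x y s t‖ + |x t - x s| * ‖F (y s)‖ := by
  calc ‖y t - y s‖ = ‖eulerRemainder F x y s t + (x t - x s) • F (y s)‖ := by
        simp [eulerRemainder]
    _ ≤ ‖eulerRemainder F x y s t‖ + |x t - x s| * ‖F (y s)‖ :=
        (norm_add_le _ _).trans_eq (by rw [norm_smul, Real.norm_eq_abs])

theorem norm_sub_le_two_mul_of_eulerRemainder_le {C : ℝ} (hw : 0 ≤ w) (hγ : 0 < γ)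
    (hx : |x t - x s| ≤ w ^ γ) (hFG : ‖F (y s)‖ ≤ G) (hC : C * w ^ (α * γ) ≤ 1)
    (hR : ‖eulerRemainder F x y s t‖ ≤ C * G * w ^ ((1 + α) * γ)) :
    ‖y t - y s‖ ≤ 2 * G * w ^ γ := by
  have hG : 0 ≤ G := (norm_nonneg _).trans hFG
  have hsplit : w ^ ((1 + α) * γ) = w ^ (α * γ) * w ^ γ := by
    rw [← Real.rpow_add_of_nonneg hw (by positivity) hγ.le]
    ring_nf
  calc ‖y t - y s‖
      ≤ C * G * (w ^ (α * γ) * w ^ γ) + w ^ γ * G :=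
        (norm_sub_le_norm_eulerRemainder_add F x y s t).trans
          (add_le_add (hsplit ▸ hR) (by gcongr))
    _ = (C * w ^ (α * γ)) * (G * w ^ γ) + G * w ^ γ := by ring
    _ ≤ 1 * (G * w ^ γ) + G * w ^ γ := by gcongr
    _ = 2 * G * w ^ γ := by ring

theorem norm_smul_sub_le_of_holderWith (hF : HolderWith K α F) {A c : ℝ} {v v' : E} (hw : 0 ≤ w)
    (hγ : 0 < γ) (hc : |c| ≤ w ^ γ) (hA : 0 ≤ A) (hv : ‖v - v'‖ ≤ A * w ^ γ) :
    ‖c • (F v - F v')‖ ≤ K * A ^ (α : ℝ) * w ^ ((1 + α) * γ) := by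
  have hFv : ‖F v - F v'‖ ≤ K * (A * w ^ γ) ^ (α : ℝ) := by
    rw [← dist_eq_norm] at hv ⊢
    exact hF.dist_le_of_le hv
  calc ‖c • (F v - F v')‖ ≤ w ^ γ * (K * (A * w ^ γ) ^ (α : ℝ)) := by
        rw [norm_smul, Real.norm_eq_abs]
        gcongr
    _ = K * A ^ (α : ℝ) * (w ^ γ * w ^ (γ * α)) := by
        rw [Real.mul_rpow hA (by positivity), Real.rpow_mul hw]
        ring
    _ = K * A ^ (α : ℝ) * w ^ ((1 + α) * γ) := by
        rw [← Real.rpow_add_of_nonneg hw hγ.le (by positivity)]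
        ring_nf

end Remainder

theorem exists_isEulerScheme {E κ : Type*} [NormedAddCommGroup E] [NormedSpace ℝ E]
    [LinearOrder κ] [WellFoundedLT κ] (F : E → E) (x : κ → ℝ) (y₀ : E) :
    ∃ y : κ → E, IsEulerScheme F x y ∧ ∀ v, IsMin v → y v = y₀ := by
  classical
  let step (v : κ) (ih : ∀ u, u < v → E) : E :=
    if h : ∃ u, u ⋖ v then
      ih h.choose h.choose_spec.lt + (x v - x h.choose) • F (ih h.choose h.choose_spec.lt)
    else y₀
  let y : κ → E := wellFounded_lt.fix step
  have hy (v : κ) : y v = step v fun u _ => y u := wellFounded_lt.fix_eq step v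
  refine ⟨y, fun u v huv => ?_, fun v hv => ?_⟩
  · have h : ∃ u, u ⋖ v := ⟨u, huv⟩
    have hchoose : h.choose = u := h.choose_spec.unique_left huv
    have hyv : y v = y u + (x v - x u) • F (y u) := by
      rw [hy v]
      simp only [step, dif_pos h, hchoose]
    simp [eulerRemainder, hyv]
  · have h : ¬ ∃ u, u ⋖ v := fun ⟨u, huv⟩ => hv.not_lt huv.lt
    rw [hy v]
    simp only [step, dif_neg h]

theorem exists_four_mul_add_mul_two_rpow_le (K : ℝ≥0) {θ : ℝ} (hθ : 1 < θ) :
    ∃ C : ℝ, 0 ≤ C ∧ 4 * K + C * 2 ^ (1 - θ) ≤ C := by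
  have h2 : (2 : ℝ) ^ (1 - θ) < 1 := Real.rpow_lt_one_of_one_lt_of_neg one_lt_two (by linarith)
  have hpos : 0 < 1 - (2 : ℝ) ^ (1 - θ) := sub_pos.2 h2
  refine ⟨4 * K / (1 - 2 ^ (1 - θ)), by positivity, le_of_eq ?_⟩
  field_simp
  ring

theorem exists_norm_le_mul_one_add_norm {E : Type*} [NormedAddCommGroup E] {F : E → E}
    {K α : ℝ≥0} (hF : HolderWith K α F) (hα : α ≤ 1) :
    ∃ L : ℝ, 1 ≤ L ∧ ∀ u, ‖F u‖ ≤ L * (1 + ‖u‖) := by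
  refine ⟨1 + ‖F 0‖ + K, by linarith [norm_nonneg (F 0), K.2], fun u => ?_⟩
  have hFu : ‖F u - F 0‖ ≤ K * ‖u‖ ^ (α : ℝ) := by
    simpa [dist_eq_norm] using hF.dist_le u 0
  have hpow : ‖u‖ ^ (α : ℝ) ≤ 1 + ‖u‖ := calc
    ‖u‖ ^ (α : ℝ) ≤ (1 + ‖u‖) ^ (α : ℝ) := by gcongr; linarith
    _ ≤ 1 + ‖u‖ := Real.rpow_le_self_of_one_le (by linarith [norm_nonneg u]) hα
  calc ‖F u‖ ≤ ‖F 0‖ + ‖F u - F 0‖ := norm_le_norm_add_norm_sub' _ _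
    _ ≤ ‖F 0‖ * (1 + ‖u‖) + K * (1 + ‖u‖) := by
        gcongr
        · exact le_mul_of_one_le_right (norm_nonneg _) (by linarith [norm_nonneg u])
        · exact hFu.trans (by gcongr)
    _ ≤ (1 + ‖F 0‖ + K) * (1 + ‖u‖) := by linarith [norm_nonneg u]

/-- The contraction factor `2 ^ (1 - (1 + α) * γ)` comes from the two halves; each of the two cross
terms of Chen's relation contributes `2 * K * G`. -/
theorem norm_eulerRemainder_le_of_bisect {E ι : Type*} [NormedAddCommGroup E] [NormedSpace ℝ E]
    {F : E → E} {x : ι → ℝ} {y : ι → E} {K α : ℝ≥0} {γ C G w : ℝ} {s u u' t : ι}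
    (hF : HolderWith K α F) (hα : α ≤ 1) (hγ : 0 < γ) (hC₀ : 0 ≤ C)
    (hC : 4 * K + C * 2 ^ (1 - (1 + α) * γ) ≤ C) (hG : 1 ≤ G) (hw : 0 ≤ w)
    (hsmall : C * w ^ (α * γ) ≤ 1)
    (hxsu : |x u - x s| ≤ w ^ γ) (hxuu' : |x u' - x u| ≤ w ^ γ) (hxut : |x t - x u| ≤ w ^ γ)
    (hxu't : |x t - x u'| ≤ w ^ γ) (hFs : ‖F (y s)‖ ≤ G) (hFu : ‖F (y u)‖ ≤ G)
    (hsu : ‖eulerRemainder F x y s u‖ ≤ C * G * (w / 2) ^ ((1 + α) * γ))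
    (huu' : eulerRemainder F x y u u' = 0)
    (hu't : ‖eulerRemainder F x y u' t‖ ≤ C * G * (w / 2) ^ ((1 + α) * γ)) :
    ‖eulerRemainder F x y s t‖ ≤ C * G * w ^ ((1 + α) * γ) := by
  have hw2 : (w / 2) ^ ((1 + α) * γ) ≤ w ^ ((1 + α) * γ) := by
    gcongr
    linarith
  have hyu : ‖y u - y s‖ ≤ 2 * G * w ^ γ :=
    norm_sub_le_two_mul_of_eulerRemainder_le hw hγ hxsu hFs hsmall (hsu.trans (by gcongr))
  have hyu' : ‖y u' - y u‖ ≤ 2 * G * w ^ γ :=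
    norm_sub_le_two_mul_of_eulerRemainder_le hw hγ hxuu' hFu hsmall
      (by rw [huu', norm_zero]; positivity)
  have hcross {a b : ι} (hx : |x t - x b| ≤ w ^ γ) (hy : ‖y b - y a‖ ≤ 2 * G * w ^ γ) :
      ‖(x t - x b) • (F (y b) - F (y a))‖ ≤ 2 * K * G * w ^ ((1 + α) * γ) := by
    refine (norm_smul_sub_le_of_holderWith hF hw hγ hx (by positivity) hy).trans ?_
    have hGα : (2 * G) ^ (α : ℝ) ≤ 2 * G := Real.rpow_le_self_of_one_le (by linarith) hα
    calc K * (2 * G) ^ (α : ℝ) * w ^ ((1 + α) * γ)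
        ≤ K * (2 * G) * w ^ ((1 + α) * γ) := by gcongr
      _ = 2 * K * G * w ^ ((1 + α) * γ) := by ring
  calc ‖eulerRemainder F x y s t‖
      ≤ ‖eulerRemainder F x y s u‖ + ‖eulerRemainder F x y u' t‖ +
          ‖(x t - x u') • (F (y u') - F (y u))‖ + ‖(x t - x u) • (F (y u) - F (y s))‖ := by
        rw [eulerRemainder_eq_add F x y s u t, eulerRemainder_eq_add F x y u u' t, huu', zero_add,
          ← add_assoc]
        exact norm_add₄_le
    _ ≤ C * G * (w / 2) ^ ((1 + α) * γ) + C * G * (w / 2) ^ ((1 + α) * γ) +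
          2 * K * G * w ^ ((1 + α) * γ) + 2 * K * G * w ^ ((1 + α) * γ) := by
        gcongr
        · exact hcross hxu't hyu'
        · exact hcross hxut hyu
    _ = (4 * K + C * 2 ^ (1 - (1 + α) * γ)) * (G * w ^ ((1 + α) * γ)) := by
        rw [Real.div_rpow hw zero_le_two, Real.rpow_sub two_pos, Real.rpow_one]
        ring
    _ ≤ C * (G * w ^ ((1 + α) * γ)) := by gcongr
    _ = C * G * w ^ ((1 + α) * γ) := (mul_assoc ..).symm

section EulerScheme

variable {E κ : Type*} [NormedAddCommGroup E] [NormedSpace ℝ E] [LinearOrder κ] [Finite κ]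
  {F : E → E} {x : κ → ℝ} {y : κ → E} {ω : κ → κ → ℝ} {K α : ℝ≥0} {γ C G L : ℝ} {s t : κ}

theorem IsEulerScheme.norm_eulerRemainder_le (hy : IsEulerScheme F x y) (hω : IsControl ω)
    (hx : ∀ ⦃s t⦄, s ≤ t → |x t - x s| ≤ ω s t ^ γ) (hF : HolderWith K α F) (hα : α ≤ 1)
    (hγ : 0 < γ) (hC₀ : 0 ≤ C) (hC : 4 * K + C * 2 ^ (1 - (1 + α) * γ) ≤ C) (hG : 1 ≤ G)
    (hst : s ≤ t) (hFG : ∀ v ∈ Icc s t, ‖F (y v)‖ ≤ G) (hsmall : C * ω s t ^ (α * γ) ≤ 1) :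
    ‖eulerRemainder F x y s t‖ ≤ C * G * ω s t ^ ((1 + α) * γ) := by
  revert hFG hsmall
  refine hω.halving_induction (P := fun s t => (∀ v ∈ Icc s t, ‖F (y v)‖ ≤ G) →
    C * ω s t ^ (α * γ) ≤ 1 → ‖eulerRemainder F x y s t‖ ≤ C * G * ω s t ^ ((1 + α) * γ))
    (fun s _ _ => ?_) (fun s u u' t hsu huu' hu't hωsu hωu't ihl ihr hFG hsmall => ?_) hst
  · have := hω.nonneg (le_refl s)
    rw [eulerRemainder_self, norm_zero]
    positivity
  have hsu' : s ≤ u' := hsu.trans huu'.le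
  have hut : u ≤ t := huu'.le.trans hu't
  have hst := hsu.trans hut
  have hxle {a b : κ} (hsa : s ≤ a) (hab : a ≤ b) (hbt : b ≤ t) : |x b - x a| ≤ ω s t ^ γ :=
    (hx hab).trans (Real.rpow_le_rpow (hω.nonneg hab) (hω.mono hsa hab hbt) hγ.le)
  have hhalf {a b : κ} (hab : a ≤ b) (hωab : ω a b ≤ ω s t / 2)
      (h : C * ω a b ^ (α * γ) ≤ 1 →
        ‖eulerRemainder F x y a b‖ ≤ C * G * ω a b ^ ((1 + α) * γ)) :
      ‖eulerRemainder F x y a b‖ ≤ C * G * (ω s t / 2) ^ ((1 + α) * γ) := by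
    have hωab₀ := hω.nonneg hab
    refine (h (le_trans ?_ hsmall)).trans (by gcongr)
    gcongr
    linarith
  exact norm_eulerRemainder_le_of_bisect hF hα hγ hC₀ hC hG (hω.nonneg hst) hsmall
    (hxle le_rfl hsu hut) (hxle hsu huu'.le hu't) (hxle hsu hut le_rfl) (hxle hsu' hu't le_rfl)
    (hFG s ⟨le_rfl, hst⟩) (hFG u ⟨hsu, hut⟩)
    (hhalf hsu hωsu (ihl fun v hv => hFG v ⟨hv.1, hv.2.trans hut⟩)) (hy huu')
    (hhalf hu't hωu't (ihr fun v hv => hFG v ⟨hsu'.trans hv.1, hv.2⟩))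

theorem IsEulerScheme.one_add_norm_le_two_mul (hy : IsEulerScheme F x y) (hω : IsControl ω)
    (hx : ∀ ⦃s t⦄, s ≤ t → |x t - x s| ≤ ω s t ^ γ) (hF : HolderWith K α F) (hα : α ≤ 1)
    (hγ : 0 < γ) (hC₀ : 0 ≤ C) (hC : 4 * K + C * 2 ^ (1 - (1 + α) * γ) ≤ C) (hL : 1 ≤ L)
    (hFL : ∀ u, ‖F u‖ ≤ L * (1 + ‖u‖)) (hst : s ≤ t) (hsmall : C * ω s t ^ (α * γ) ≤ 1)
    (hsmallL : 4 * L * ω s t ^ γ ≤ 1) : 1 + ‖y t‖ ≤ 2 * (1 + ‖y s‖) := by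
  obtain ⟨v, hv, hmax⟩ := (Icc s t).toFinite.exists_maximalFor (fun v => ‖y v‖) _
    ⟨s, le_rfl, hst⟩
  have hle {u : κ} (hu : u ∈ Icc s t) : ‖y u‖ ≤ ‖y v‖ := le_of_not_gt fun h =>
    h.not_ge (hmax hu h.le)
  have : 0 ≤ L := zero_le_one.trans hL
  have hωsv : ω s v ≤ ω s t := hω.mono le_rfl hv.1 hv.2
  have hωsv₀ : 0 ≤ ω s v := hω.nonneg hv.1
  have hFG (u : κ) (hu : u ∈ Icc s v) : ‖F (y u)‖ ≤ L * (1 + ‖y v‖) := calc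
    ‖F (y u)‖ ≤ L * (1 + ‖y u‖) := hFL _
    _ ≤ L * (1 + ‖y v‖) := by gcongr; exact hle ⟨hu.1, hu.2.trans hv.2⟩
  have hG : 1 ≤ L * (1 + ‖y v‖) :=
    one_le_mul_of_one_le_of_one_le hL (by linarith [norm_nonneg (y v)])
  have hsv : C * ω s v ^ (α * γ) ≤ 1 := hsmall.trans' (by gcongr)
  have hincr : ‖y v - y s‖ ≤ 2 * (L * (1 + ‖y v‖)) * ω s v ^ γ :=
    norm_sub_le_two_mul_of_eulerRemainder_le hωsv₀ hγ (hx hv.1) (hFG s ⟨le_rfl, hv.1⟩) hsv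
      (hy.norm_eulerRemainder_le hω hx hF hα hγ hC₀ hC hG hv.1 hFG hsv)
  have hhalf : 2 * (L * (1 + ‖y v‖)) * ω s v ^ γ ≤ (1 + ‖y v‖) / 2 := calc
    2 * (L * (1 + ‖y v‖)) * ω s v ^ γ ≤ 2 * (L * (1 + ‖y v‖)) * ω s t ^ γ := by gcongr
    _ = (4 * L * ω s t ^ γ) * ((1 + ‖y v‖) / 2) := by ring
    _ ≤ (1 + ‖y v‖) / 2 := mul_le_of_le_one_left (by positivity) hsmallL
  linarith [hle ⟨hst, le_rfl⟩, norm_le_norm_add_norm_sub' (y v) (y s)]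

theorem IsControl.mul_le_pow_mul (hω : IsControl ω) {g : κ → ℝ} {c A η : ℝ} (hg : ∀ v, 0 ≤ g v)
    (hc : 1 ≤ c) (hA : 1 ≤ A) (hcell : ∀ ⦃u u'⦄, u ⋖ u' → g u' ≤ c * g u)
    (hloc : ∀ ⦃s t⦄, s ≤ t → ω s t ≤ η → g t ≤ A * g s) (k : ℕ) (hst : s ≤ t)
    (hk : ω s t ≤ 2 ^ k * η) : c * g t ≤ (A * c) ^ 2 ^ k * g s := by
  induction k generalizing s t with
  | zero =>
    have := hloc hst (by simpa using hk)
    calc c * g t ≤ c * (A * g s) := by gcongr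
      _ = (A * c) ^ 2 ^ 0 * g s := by ring
  | succ k ih =>
    have hAc : 1 ≤ A * c := one_le_mul_of_one_le_of_one_le hA hc
    rcases hst.eq_or_lt with rfl | hlt
    · have : c ≤ (A * c) ^ 2 ^ (k + 1) := calc
        c ≤ A * c := le_mul_of_one_le_left (by linarith) hA
        _ ≤ (A * c) ^ 2 ^ (k + 1) := le_self_pow₀ hAc (by positivity)
      exact mul_le_mul_of_nonneg_right this (hg s)
    obtain ⟨u, u', hsu, huu', hut', hωu, hωu'⟩ := hω.exists_covBy_le_half hlt
    have hk2 : ω s t / 2 ≤ 2 ^ k * η := by rw [pow_succ] at hk; linarith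
    calc c * g t ≤ (A * c) ^ 2 ^ k * g u' := ih hut' (hωu'.trans hk2)
      _ ≤ (A * c) ^ 2 ^ k * (c * g u) := by gcongr; exact hcell huu'
      _ ≤ (A * c) ^ 2 ^ k * ((A * c) ^ 2 ^ k * g s) :=
        mul_le_mul_of_nonneg_left (ih hsu (hωu.trans hk2)) (by positivity)
      _ = (A * c) ^ 2 ^ (k + 1) * g s := by ring

theorem IsEulerScheme.one_add_norm_le {W η : ℝ} (hy : IsEulerScheme F x y)
    (hω : IsControl ω) (hx : ∀ ⦃s t⦄, s ≤ t → |x t - x s| ≤ ω s t ^ γ) (hF : HolderWith K α F)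
    (hα : α ≤ 1) (hγ : 0 < γ) (hC₀ : 0 ≤ C) (hC : 4 * K + C * 2 ^ (1 - (1 + α) * γ) ≤ C)
    (hL : 1 ≤ L) (hFL : ∀ u, ‖F u‖ ≤ L * (1 + ‖u‖))
    (hη : ∀ w, 0 ≤ w → w ≤ η → C * w ^ (α * γ) ≤ 1 ∧ 4 * L * w ^ γ ≤ 1)
    (hW : ∀ ⦃s t⦄, s ≤ t → ω s t ≤ W) {k : ℕ} (hk : W ≤ 2 ^ k * η) (hst : s ≤ t) :
    1 + ‖y t‖ ≤ (2 * (1 + L * W ^ γ)) ^ 2 ^ k * (1 + ‖y s‖) := by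
  have : 0 ≤ L := zero_le_one.trans hL
  have hW₀ : 0 ≤ W := (hω.nonneg hst).trans (hW hst)
  have hc : 1 ≤ 1 + L * W ^ γ := le_add_of_nonneg_right (by positivity)
  have hcell ⦃u u' : κ⦄ (huu' : u ⋖ u') : 1 + ‖y u'‖ ≤ (1 + L * W ^ γ) * (1 + ‖y u‖) := by
    have hincr : ‖y u' - y u‖ ≤ W ^ γ * (L * (1 + ‖y u‖)) := calc
      ‖y u' - y u‖ ≤ |x u' - x u| * ‖F (y u)‖ := by
        simpa [hy huu'] using norm_sub_le_norm_eulerRemainder_add F x y u u'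
      _ ≤ W ^ γ * (L * (1 + ‖y u‖)) := by
        gcongr
        · exact (hx huu'.le).trans
            (Real.rpow_le_rpow (hω.nonneg huu'.le) (hW huu'.le) hγ.le)
        · exact hFL _
    linarith [norm_le_norm_add_norm_sub' (y u') (y u)]
  have hloc ⦃s t : κ⦄ (hst : s ≤ t) (hωη : ω s t ≤ η) : 1 + ‖y t‖ ≤ 2 * (1 + ‖y s‖) :=
    have hsmall := hη _ (hω.nonneg hst) hωη
    hy.one_add_norm_le_two_mul hω hx hF hα hγ hC₀ hC hL hFL hst hsmall.1 hsmall.2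
  exact (le_mul_of_one_le_left (by positivity) hc).trans <|
    hω.mul_le_pow_mul (fun v => by positivity) hc one_le_two hcell hloc k hst
      ((hW hst).trans hk)

theorem IsEulerScheme.isDavieSolution {W η B : ℝ} (hy : IsEulerScheme F x y)
    (hω : IsControl ω) (hx : ∀ ⦃s t⦄, s ≤ t → |x t - x s| ≤ ω s t ^ γ) (hF : HolderWith K α F)
    (hα : α ≤ 1) (hγ : 0 < γ) (hC₀ : 0 ≤ C) (hC : 4 * K + C * 2 ^ (1 - (1 + α) * γ) ≤ C)
    (hη₀ : 0 < η) (hη : ∀ w, 0 ≤ w → w ≤ η → C * w ^ (α * γ) ≤ 1)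
    (hW : ∀ ⦃s t⦄, s ≤ t → ω s t ≤ W) (hB : ∀ v, ‖y v‖ ≤ B) (hG : 1 ≤ G)
    (hFG : ∀ v, ‖F (y v)‖ ≤ G) :
    IsDavieSolution F x ω ((1 + α) * γ)
      (C * G + (2 * B + W ^ γ * G) / η ^ ((1 + α) * γ)) y := by
  intro s t hst
  have hω₀ := hω.nonneg hst
  have hWγ := Real.rpow_le_rpow hω₀ (hW hst) hγ.le
  have : 0 ≤ G := zero_le_one.trans hG
  have hB₀ : 0 ≤ B := (norm_nonneg _).trans (hB s)
  have hW₀ : 0 ≤ W := hω₀.trans (hW hst)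
  rw [add_mul]
  rcases le_or_gt (ω s t) η with hsmall | hlarge
  · have hloc := hy.norm_eulerRemainder_le hω hx hF hα hγ hC₀ hC hG hst (fun v _ => hFG v)
      (hη _ hω₀ hsmall)
    exact hloc.trans (le_add_of_nonneg_right (by positivity))
  · have hcrude : ‖eulerRemainder F x y s t‖ ≤ 2 * B + W ^ γ * G := calc
      ‖y t - y s - (x t - x s) • F (y s)‖ ≤ ‖y t‖ + ‖y s‖ + |x t - x s| * ‖F (y s)‖ := by
        rw [← Real.norm_eq_abs, ← norm_smul]
        exact (norm_sub_le _ _).trans (add_le_add_left (norm_sub_le _ _) _)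
      _ ≤ B + B + W ^ γ * G := by
        gcongr
        exacts [hB t, hB s, (hx hst).trans hWγ, hFG s]
      _ = 2 * B + W ^ γ * G := by ring
    have hratio : 1 ≤ ω s t ^ ((1 + α) * γ) / η ^ ((1 + α) * γ) := by
      rw [one_le_div (by positivity)]
      gcongr
    calc ‖eulerRemainder F x y s t‖
        ≤ (2 * B + W ^ γ * G) * (ω s t ^ ((1 + α) * γ) / η ^ ((1 + α) * γ)) :=
          hcrude.trans (le_mul_of_one_le_right (by positivity) hratio)
      _ = (2 * B + W ^ γ * G) / η ^ ((1 + α) * γ) * ω s t ^ ((1 + α) * γ) := by ring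
      _ ≤ _ := le_add_of_nonneg_left (by positivity)

end EulerScheme

section Existence

variable {E ι : Type*} [NormedAddCommGroup E] [NormedSpace ℝ E] [LinearOrder ι] [BoundedOrder ι]
  {F : E → E} {x : ι → ℝ} {ω : ι → ι → ℝ} {K α : ℝ≥0} {γ : ℝ}

theorem exists_uniform_bound_of_isEulerScheme (hω : IsControl ω)
    (hx : ∀ ⦃s t⦄, s ≤ t → |x t - x s| ≤ ω s t ^ γ) (hF : HolderWith K α F) (hα₀ : 0 < α)
    (hα : α ≤ 1) (hγ : 0 < γ) (hθ : 1 < (1 + α) * γ) (y₀ : E) :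
    ∃ B M : ℝ, 0 ≤ M ∧ ∀ (T : Finset ι) (hT : ⊥ ∈ T) (y : T → E),
      IsEulerScheme F (fun v : T => x v) y → y ⟨⊥, hT⟩ = y₀ →
        (∀ v, ‖y v‖ ≤ B) ∧
          IsDavieSolution F (fun v : T => x v) (fun s t => ω s t) ((1 + α) * γ) M y := by
  obtain ⟨C, hC₀, hC⟩ := exists_four_mul_add_mul_two_rpow_le K hθ
  obtain ⟨L, hL, hFL⟩ := exists_norm_le_mul_one_add_norm hF hα
  obtain ⟨η₁, hη₁, hsmall₁⟩ := exists_pos_forall_mul_rpow_lt C (e := α * γ) (by positivity) one_pos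
  obtain ⟨η₂, hη₂, hsmall₂⟩ := exists_pos_forall_mul_rpow_lt (4 * L) hγ one_pos
  set η := min η₁ η₂
  have hη₀ : 0 < η := lt_min hη₁ hη₂
  have hη (w : ℝ) (hw : 0 ≤ w) (hwη : w ≤ η) : C * w ^ (α * γ) ≤ 1 ∧ 4 * L * w ^ γ ≤ 1 :=
    ⟨(hsmall₁ w hw (hwη.trans (min_le_left ..))).le,
      (hsmall₂ w hw (hwη.trans (min_le_right ..))).le⟩
  obtain ⟨k, hk⟩ := pow_unbounded_of_one_lt (ω ⊥ ⊤ / η) one_lt_two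
  set B := (2 * (1 + L * ω ⊥ ⊤ ^ γ)) ^ 2 ^ k * (1 + ‖y₀‖)
  let G := L * B
  have hω₀ : 0 ≤ ω ⊥ ⊤ := hω.nonneg bot_le
  refine ⟨B, C * G + (2 * B + ω ⊥ ⊤ ^ γ * G) / η ^ ((1 + α) * γ), by positivity,
    fun T hT y hy hy₀ => ?_⟩
  have hωT : IsControl fun s t : T => ω s t := hω.comp fun _ _ hst => hst
  have hxT ⦃s t : T⦄ (hst : s ≤ t) : |x t - x s| ≤ ω s t ^ γ := hx hst
  have hW ⦃s t : T⦄ (hst : s ≤ t) : ω s t ≤ ω ⊥ ⊤ := hω.le_bot_top hst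
  have hB (v : T) : 1 + ‖y v‖ ≤ B := by
    have hbot : (⟨⊥, hT⟩ : T) ≤ v := Subtype.mk_le_mk.2 bot_le
    simpa only [B, ← hy₀] using
      hy.one_add_norm_le hωT hxT hF hα hγ hC₀ hC hL hFL hη hW ((div_lt_iff₀ hη₀).1 hk).le hbot
  have hG : 1 ≤ G := one_le_mul_of_one_le_of_one_le hL
    (by linarith [hB ⟨⊥, hT⟩, norm_nonneg (y ⟨⊥, hT⟩)])
  exact ⟨fun v => by linarith [hB v],
    hy.isDavieSolution hωT hxT hF hα hγ hC₀ hC hη₀ (fun w hw hwη => (hη w hw hwη).1) hW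
      (fun v => by linarith [hB v]) hG
      fun v => (hFL _).trans (mul_le_mul_of_nonneg_left (hB v) (zero_le_one.trans hL))⟩

/-- The conditions defining a bounded Davie solution with `y ⊥ = y₀` are closed in the compact
space `ι → closedBall 0 B`, and any finitely many of them are met by an Euler scheme. -/
theorem exists_isDavieSolution [ProperSpace E] (hω : IsControl ω)
    (hx : ∀ ⦃s t⦄, s ≤ t → |x t - x s| ≤ ω s t ^ γ) (hF : HolderWith K α F) (hα₀ : 0 < α)
    (hα : α ≤ 1) (hγ : 0 < γ) (hθ : 1 < (1 + α) * γ) (y₀ : E) :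
    ∃ M, 0 ≤ M ∧ ∃ y : ι → E, y ⊥ = y₀ ∧ IsDavieSolution F x ω ((1 + α) * γ) M y := by
  classical
  obtain ⟨B, M, hM, hBM⟩ := exists_uniform_bound_of_isEulerScheme hω hx hF hα₀ hα hγ hθ y₀
  let S : Set (ι → E) := Set.univ.pi (fun _ => Metric.closedBall 0 B) ∩ {y | y ⊥ = y₀}
  let D (q : ι × ι) : Set (ι → E) :=
    {y | q.1 ≤ q.2 → ‖eulerRemainder F x y q.1 q.2‖ ≤ M * ω q.1 q.2 ^ ((1 + α) * γ)}
  have hS : IsCompact S := (isCompact_univ_pi fun _ => isCompact_closedBall 0 B).inter_right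
    (isClosed_eq (continuous_apply ⊥) continuous_const)
  have hD (q : ι × ι) : IsClosed (D q) := by
    have := hF.continuous hα₀
    by_cases hq : q.1 ≤ q.2
    · simp only [D, hq, true_imp_iff, eulerRemainder]
      exact isClosed_le (by fun_prop) continuous_const
    · simp [D, hq]
  obtain ⟨y, hyS, hyD⟩ := hS.inter_iInter_nonempty D hD fun Q => by
    let T : Finset ι := insert ⊥ (Q.image Prod.fst ∪ Q.image Prod.snd)
    have hT : ⊥ ∈ T := Finset.mem_insert_self ..
    obtain ⟨z, hz, hz₀⟩ := exists_isEulerScheme F (fun v : T => x v) y₀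
    have hz₀bot : z ⟨⊥, hT⟩ = y₀ := hz₀ _ fun v _ => Subtype.mk_le_mk.2 bot_le
    obtain ⟨hzB, hzD⟩ := hBM T hT z hz hz₀bot
    let y : ι → E := Function.extend Subtype.val z 0
    have hyT (v : T) : y v = z v := Subtype.val_injective.extend_apply z 0 v
    refine ⟨y, ⟨fun v _ => mem_closedBall_zero_iff.2 ?_, ?_⟩, mem_iInter₂.2 fun q hq hst => ?_⟩
    · by_cases hv : v ∈ T
      · exact hyT ⟨v, hv⟩ ▸ hzB ⟨v, hv⟩
      · have hyv : y v = 0 := Function.extend_apply' _ _ _ (by simpa using hv)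
        simpa [hyv] using (norm_nonneg _).trans (hzB ⟨⊥, hT⟩)
    · exact (hyT ⟨⊥, hT⟩).trans hz₀bot
    · have h₁ : q.1 ∈ T := Finset.mem_insert_of_mem
        (Finset.mem_union_left _ (Finset.mem_image_of_mem _ hq))
      have h₂ : q.2 ∈ T := Finset.mem_insert_of_mem
        (Finset.mem_union_right _ (Finset.mem_image_of_mem _ hq))
      simpa [eulerRemainder, hyT ⟨q.1, h₁⟩, hyT ⟨q.2, h₂⟩] using
        @hzD ⟨q.1, h₁⟩ ⟨q.2, h₂⟩ hst
  exact ⟨M, hM, y, hyS.2, fun s t hst => mem_iInter.1 hyD (s, t) hst⟩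

end Existence

section Increments

variable {E ι : Type*} [NormedAddCommGroup E] [NormedSpace ℝ E] [Preorder ι] [BoundedOrder ι]
  {F : E → E} {x : ι → ℝ} {y : ι → E} {ω : ι → ι → ℝ} {K α : ℝ≥0} {γ θ M : ℝ}

theorem IsDavieSolution.exists_norm_sub_le (hy : IsDavieSolution F x ω θ M y) (hω : IsControl ω)
    (hx : ∀ ⦃s t⦄, s ≤ t → |x t - x s| ≤ ω s t ^ γ) (hF : HolderWith K α F) (hγ : 0 ≤ γ)
    (hθ : 0 ≤ θ) (hM : 0 ≤ M) :
    ∃ G : ℝ, 0 ≤ G ∧ ∀ ⦃s t⦄, s ≤ t → ‖y t - y s‖ ≤ M * ω s t ^ θ + G * |x t - x s| := by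
  set D := M * ω ⊥ ⊤ ^ θ + ω ⊥ ⊤ ^ γ * ‖F (y ⊥)‖
  have hD (t : ι) : ‖y t - y ⊥‖ ≤ D := by
    have hωt₀ : 0 ≤ ω ⊥ t := hω.nonneg bot_le
    have hωt : ω ⊥ t ≤ ω ⊥ ⊤ := hω.le_bot_top bot_le
    refine (norm_sub_le_norm_eulerRemainder_add F x y ⊥ t).trans (add_le_add ?_ ?_)
    · exact (hy bot_le).trans (by gcongr)
    · exact mul_le_mul_of_nonneg_right ((hx bot_le).trans (by gcongr)) (norm_nonneg _)
  have hG (t : ι) : ‖F (y t)‖ ≤ ‖F (y ⊥)‖ + K * D ^ (α : ℝ) := by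
    have hFt : ‖F (y t) - F (y ⊥)‖ ≤ K * D ^ (α : ℝ) := by
      rw [← dist_eq_norm]
      exact hF.dist_le_of_le (dist_eq_norm (y t) (y ⊥) ▸ hD t)
    exact (norm_le_norm_add_norm_sub' _ _).trans (add_le_add_right hFt _)
  refine ⟨_, (norm_nonneg _).trans (hG ⊥), fun s t hst => ?_⟩
  calc ‖y t - y s‖ ≤ ‖eulerRemainder F x y s t‖ + |x t - x s| * ‖F (y s)‖ :=
        norm_sub_le_norm_eulerRemainder_add F x y s t
    _ ≤ M * ω s t ^ θ + |x t - x s| * (‖F (y ⊥)‖ + K * D ^ (α : ℝ)) := by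
        gcongr
        exacts [hy hst, hG s]
    _ = M * ω s t ^ θ + (‖F (y ⊥)‖ + K * D ^ (α : ℝ)) * |x t - x s| := by ring

theorem IsDavieSolution.exists_norm_smul_sub_le
    (hy : IsDavieSolution F x ω ((1 + α) * γ) M y) (hω : IsControl ω)
    (hx : ∀ ⦃s t⦄, s ≤ t → |x t - x s| ≤ ω s t ^ γ) (hF : HolderWith K α F) (hγ : 0 < γ)
    (hM : 0 ≤ M) :
    ∃ A : ℝ, 0 ≤ A ∧ ∀ ⦃s v t⦄, s ≤ v → v ≤ t →
      ‖(x t - x s) • F (y v) - (y t - y s)‖ ≤ A * ω s t ^ ((1 + α) * γ) := by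
  obtain ⟨G, hG, hyG⟩ := hy.exists_norm_sub_le hω hx hF hγ.le (by positivity) hM
  have hω₀ : 0 ≤ ω ⊥ ⊤ := hω.nonneg bot_le
  set D := M * ω ⊥ ⊤ ^ ((1 + α) * γ - γ) + G
  have hγθ : γ ≤ (1 + α) * γ := le_mul_of_one_le_left hγ.le (by simp)
  refine ⟨K * D ^ (α : ℝ) + M, by positivity, fun s v t hsv hvt => ?_⟩
  have hsv₀ : 0 ≤ ω s v := hω.nonneg hsv
  have hst : ω s v ≤ ω s t := hω.mono le_rfl hsv hvt
  have hyv : ‖y v - y s‖ ≤ D * ω s t ^ γ := calc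
    ‖y v - y s‖ ≤ M * ω s v ^ ((1 + α) * γ) + G * |x v - x s| := hyG hsv
    _ ≤ M * (ω ⊥ ⊤ ^ ((1 + α) * γ - γ) * ω s v ^ γ) + G * ω s v ^ γ := by
      gcongr
      exacts [rpow_le_rpow_sub_mul_rpow hsv₀ (hω.le_bot_top hsv) hγ.le hγθ, hx hsv]
    _ = D * ω s v ^ γ := by ring
    _ ≤ D * ω s t ^ γ := by gcongr
  have hcross : ‖(x t - x s) • (F (y v) - F (y s))‖ ≤
      K * D ^ (α : ℝ) * ω s t ^ ((1 + α) * γ) :=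
    norm_smul_sub_le_of_holderWith hF (hsv₀.trans hst) hγ (hx (hsv.trans hvt)) (by positivity) hyv
  calc ‖(x t - x s) • F (y v) - (y t - y s)‖
      = ‖(x t - x s) • (F (y v) - F (y s)) - eulerRemainder F x y s t‖ := by
        rw [eulerRemainder]
        congr 1
        module
    _ ≤ K * D ^ (α : ℝ) * ω s t ^ ((1 + α) * γ) + M * ω s t ^ ((1 + α) * γ) :=
        (norm_sub_le _ _).trans (add_le_add hcross (hy (hsv.trans hvt)))
    _ = (K * D ^ (α : ℝ) + M) * ω s t ^ ((1 + α) * γ) := (add_mul ..).symm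

end Increments

theorem IsControl.norm_sum_sub_le {E ι : Type*} [SeminormedAddCommGroup E] [Preorder ι]
    [BoundedOrder ι] {ω : ι → ι → ℝ} (hω : IsControl ω) {A ρ θ : ℝ} (hA : 0 ≤ A) (hθ : 1 ≤ θ)
    {n : ℕ} {t : Fin (n + 1) → ι} (ht : Monotone t) (y : ι → E) (Ξ : Fin n → E)
    (hΞ : ∀ i, ‖Ξ i - (y (t i.succ) - y (t i.castSucc))‖ ≤ A * ω (t i.castSucc) (t i.succ) ^ θ)
    (hρ₀ : 0 ≤ ρ) (hρ : ∀ i : Fin n, ω (t i.castSucc) (t i.succ) ≤ ρ) :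
    ‖∑ i, Ξ i - (y (t (Fin.last n)) - y (t 0))‖ ≤ A * ρ ^ (θ - 1) * ω ⊥ ⊤ := by
  have hcell (i : Fin n) : t i.castSucc ≤ t i.succ := ht i.castSucc_lt_succ.le
  calc ‖∑ i, Ξ i - (y (t (Fin.last n)) - y (t 0))‖
      = ‖∑ i, (Ξ i - (y (t i.succ) - y (t i.castSucc)))‖ := by
        rw [Finset.sum_sub_distrib, sum_succ_sub_castSucc fun i => y (t i)]
    _ ≤ ∑ i : Fin n, A * ω (t i.castSucc) (t i.succ) ^ θ := norm_sum_le_of_le _ fun i _ => hΞ i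
    _ ≤ ∑ i : Fin n, A * ρ ^ (θ - 1) * ω (t i.castSucc) (t i.succ) := by
        refine Finset.sum_le_sum fun i _ => ?_
        rw [mul_assoc]
        have := rpow_le_rpow_sub_mul_rpow (hω.nonneg (hcell i)) (hρ i) zero_le_one hθ
        rw [Real.rpow_one] at this
        gcongr
    _ = A * ρ ^ (θ - 1) * ∑ i : Fin n, ω (t i.castSucc) (t i.succ) := (Finset.mul_sum ..).symm
    _ ≤ A * ρ ^ (θ - 1) * ω ⊥ ⊤ := by
        gcongr
        exact (hω.sum_le ht).trans (hω.le_bot_top (ht (Fin.zero_le _)))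

section PVariation

variable {f : ℝ → ℝ} {p a b s t : ℝ}

theorem sum_le_pVar (f : ℝ → ℝ) (p : ℝ) {n : ℕ} {τ : Fin (n + 1) → ℝ} (hτ : StrictMono τ)
    (hτmem : ∀ i, τ i ∈ Icc a b) :
    ∑ i : Fin n, ENNReal.ofReal (|f (τ i.succ) - f (τ i.castSucc)| ^ p) ≤ pVar f p a b :=
  le_iSup₂_of_le n τ <| le_iSup₂_of_le hτ hτmem le_rfl

theorem pVar_le_iff {c : ENNReal} : pVar f p a b ≤ c ↔
    ∀ (n : ℕ) (τ : Fin (n + 1) → ℝ), StrictMono τ → (∀ i, τ i ∈ Icc a b) →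
      ∑ i : Fin n, ENNReal.ofReal (|f (τ i.succ) - f (τ i.castSucc)| ^ p) ≤ c := by
  simp only [pVar, iSup_le_iff]

theorem ofReal_add_sum_le_pVar (f : ℝ → ℝ) (p : ℝ) {n : ℕ} {τ : Fin (n + 1) → ℝ}
    (hτ : StrictMono τ) (hτmem : ∀ i, τ i ∈ Icc (τ 0) b) (hs : s < τ 0) :
    ENNReal.ofReal (|f (τ 0) - f s| ^ p) +
      ∑ i : Fin n, ENNReal.ofReal (|f (τ i.succ) - f (τ i.castSucc)| ^ p) ≤ pVar f p s b := by
  have hmem : ∀ i, Matrix.vecCons s τ i ∈ Icc s b :=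
    Fin.cases ⟨le_rfl, hs.le.trans (hτmem 0).2⟩ fun i => ⟨hs.le.trans (hτmem i).1, (hτmem i).2⟩
  simpa [Fin.sum_univ_succ (n := n)] using sum_le_pVar f p (hτ.vecCons hs) hmem

theorem ofReal_add_pVar_le (hp : 0 < p) (hst : s ≤ t) (htb : t ≤ b) :
    ENNReal.ofReal (|f t - f s| ^ p) + pVar f p t b ≤ pVar f p s b := by
  rcases hst.eq_or_lt with rfl | hst
  · simp [Real.zero_rpow hp.ne']
  have hpart (n : ℕ) (τ : Fin (n + 1) → ℝ) (hτ : StrictMono τ) (hτmem : ∀ i, τ i ∈ Icc t b) :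
      ENNReal.ofReal (|f t - f s| ^ p) +
        ∑ i : Fin n, ENNReal.ofReal (|f (τ i.succ) - f (τ i.castSucc)| ^ p) ≤
          pVar f p s b := by
    rcases (hτmem 0).1.eq_or_lt with rfl | ht
    · exact ofReal_add_sum_le_pVar f p hτ hτmem hst
    · have hmem : ∀ i, Matrix.vecCons t τ i ∈ Icc t b := Fin.cases ⟨le_rfl, htb⟩ hτmem
      refine le_trans ?_ (ofReal_add_sum_le_pVar f p (hτ.vecCons ht) hmem hst)
      rw [Matrix.cons_val_zero, Fin.sum_univ_succ]
      simp only [Matrix.cons_val_succ, Fin.castSucc_succ]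
      gcongr
      exact le_add_self
  have hle : ENNReal.ofReal (|f t - f s| ^ p) ≤ pVar f p s b := by
    simpa using hpart 0 (fun _ => t) (Subsingleton.strictMono (α := Fin 1) _) fun _ => ⟨le_rfl, htb⟩
  exact add_le_of_le_tsub_left_of_le hle <| pVar_le_iff.2 fun n τ hτ hτmem =>
    ENNReal.le_sub_of_add_le_left ENNReal.ofReal_ne_top (hpart n τ hτ hτmem)

theorem monotoneOn_of_abs_sub_rpow_le {V : ℝ → ℝ} (hV : ∀ s ∈ Icc a b, ∀ t ∈ Icc a b, s ≤ t →
    |f t - f s| ^ p ≤ V t - V s) : MonotoneOn V (Icc a b) :=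
  fun s hs t ht hst => sub_nonneg.1 ((Real.rpow_nonneg (abs_nonneg _) p).trans (hV s hs t ht hst))

theorem pVar_le_ofReal {V : ℝ → ℝ} (hV : ∀ s ∈ Icc a b, ∀ t ∈ Icc a b, s ≤ t →
    |f t - f s| ^ p ≤ V t - V s) : pVar f p a b ≤ ENNReal.ofReal (V b - V a) := by
  have hVmono := monotoneOn_of_abs_sub_rpow_le hV
  refine pVar_le_iff.2 fun n τ hτ hτmem => ?_
  have hab : a ≤ b := (hτmem 0).1.trans (hτmem 0).2
  rw [← ENNReal.ofReal_sum_of_nonneg fun i _ => by positivity]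
  refine ENNReal.ofReal_le_ofReal ?_
  calc ∑ i : Fin n, |f (τ i.succ) - f (τ i.castSucc)| ^ p
      ≤ ∑ i : Fin n, (V (τ i.succ) - V (τ i.castSucc)) := Finset.sum_le_sum fun i _ =>
        hV _ (hτmem _) _ (hτmem _) (hτ i.castSucc_lt_succ).le
    _ = V (τ (Fin.last n)) - V (τ 0) := sum_succ_sub_castSucc fun i => V (τ i)
    _ ≤ V b - V a := sub_le_sub
        (hVmono (hτmem _) (right_mem_Icc.2 hab) (hτmem _).2)
        (hVmono (left_mem_Icc.2 hab) (hτmem _) (hτmem _).1)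

theorem pVar_lt_top_iff (hp : 0 < p) : pVar f p a b < ⊤ ↔
    ∃ V : ℝ → ℝ, ∀ s ∈ Icc a b, ∀ t ∈ Icc a b, s ≤ t → |f t - f s| ^ p ≤ V t - V s := by
  refine ⟨fun hf => ⟨fun t => -(pVar f p t b).toReal, fun s hs t ht hst => ?_⟩,
    fun ⟨V, hV⟩ => (pVar_le_ofReal hV).trans_lt ENNReal.ofReal_lt_top⟩
  have hadd := ofReal_add_pVar_le (f := f) hp hst ht.2
  have hs_top : pVar f p s b ≠ ⊤ :=
    ((le_add_self.trans (ofReal_add_pVar_le hp hs.1 hs.2)).trans_lt hf).ne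
  have ht_top : pVar f p t b ≠ ⊤ := ne_top_of_le_ne_top hs_top (le_add_self.trans hadd)
  have hreal := ENNReal.toReal_mono hs_top hadd
  rw [ENNReal.toReal_add ENNReal.ofReal_ne_top ht_top,
    ENNReal.toReal_ofReal (by positivity)] at hreal
  linarith

theorem pVar_lt_top_of_abs_sub_le (hp : 0 < p) {V : ℝ → ℝ} (hV : MonotoneOn V (Icc a b)) {A : ℝ}
    (hA : 0 ≤ A) (hf : ∀ s ∈ Icc a b, ∀ t ∈ Icc a b, s ≤ t →
      |f t - f s| ≤ A * (V t - V s) ^ (1 / p)) : pVar f p a b < ⊤ := by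
  refine (pVar_lt_top_iff hp).2 ⟨fun t => A ^ p * V t, fun s hs t ht hst => ?_⟩
  have hVst : 0 ≤ V t - V s := sub_nonneg.2 (hV hs ht hst)
  calc |f t - f s| ^ p ≤ (A * (V t - V s) ^ (1 / p)) ^ p := by
        gcongr
        exact hf s hs t ht hst
    _ = A ^ p * V t - A ^ p * V s := by
        rw [Real.mul_rpow hA (by positivity), ← Real.rpow_mul hVst, one_div_mul_cancel hp.ne',
          Real.rpow_one, mul_sub]

end PVariation

section OscControl

variable {ι : Type*} [Preorder ι] {x V : ι → ℝ} {p q r : ℝ} {s t : ι}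

/-- The control `osc(x,[s;t]) ^ r * (V t - V s)`. If `V` controls the `p`-variation of `x`, it
controls the `(p + r)`-variation; unlike `V t - V s` it is small on short intervals as soon as `x`
is continuous. -/
noncomputable def oscControl (x V : ι → ℝ) (r : ℝ) (s t : ι) : ℝ :=
  Metric.diam (x '' Icc s t) ^ r * (V t - V s)

theorem isControl_oscControl (hx : Bornology.IsBounded (range x)) (hV : Monotone V)
    (hr : 0 ≤ r) : IsControl (oscControl x V r) :=
  (IsControl.of_monotone hV).mul_left (fun _ _ => Real.rpow_nonneg Metric.diam_nonneg _)
    fun _ _ _ _ hs ht => Real.rpow_le_rpow Metric.diam_nonneg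
      (Metric.diam_mono (image_mono (Icc_subset_Icc hs ht)) (hx.subset (image_subset_range ..))) hr

theorem oscControl_le (hx : Bornology.IsBounded (range x)) (hV : Monotone V) (hr : 0 ≤ r)
    (hst : s ≤ t) : oscControl x V r s t ≤ Metric.diam (range x) ^ r * (V t - V s) :=
  mul_le_mul_of_nonneg_right
    (Real.rpow_le_rpow Metric.diam_nonneg (Metric.diam_mono (image_subset_range ..) hx) hr)
    (sub_nonneg.2 (hV hst))

theorem abs_sub_le_oscControl_rpow (hx : Bornology.IsBounded (range x)) (hp : 0 < p)
    (hpq : p ≤ q) (hV : |x t - x s| ^ p ≤ V t - V s) (hst : s ≤ t) :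
    |x t - x s| ≤ oscControl x V (q - p) s t ^ (1 / q) := by
  have hdiam : |x t - x s| ≤ Metric.diam (x '' Icc s t) :=
    Metric.dist_le_diam_of_mem (hx.subset (image_subset_range ..))
      (mem_image_of_mem x ⟨hst, le_rfl⟩) (mem_image_of_mem x ⟨le_rfl, hst⟩)
  rw [one_div, Real.le_rpow_inv_iff_of_pos (abs_nonneg _) _ (hp.trans_le hpq)]
  · calc |x t - x s| ^ q ≤ Metric.diam (x '' Icc s t) ^ (q - p) * |x t - x s| ^ p :=
          rpow_le_rpow_sub_mul_rpow (abs_nonneg _) hdiam hp.le hpq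
      _ ≤ Metric.diam (x '' Icc s t) ^ (q - p) * (V t - V s) := by
          have := Real.rpow_nonneg (Metric.diam_nonneg (s := x '' Icc s t)) (q - p)
          gcongr
  · exact mul_nonneg (Real.rpow_nonneg Metric.diam_nonneg _) (hV.trans' (by positivity))

end OscControl

section Interval

variable {a b : ℝ} [Fact (a ≤ b)]

theorem exists_pos_forall_oscControl_le {x V : Icc a b → ℝ} {r ε : ℝ} (hx : Continuous x)
    (hV : Monotone V) (hr : 0 < r) (hε : 0 < ε) :
    ∃ δ > 0, ∀ ⦃s t : Icc a b⦄, (t : ℝ) - s < δ → oscControl x V r s t ≤ ε := by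
  obtain ⟨η, hη, hηε⟩ := exists_pos_forall_mul_rpow_lt (V ⊤ - V ⊥) hr hε
  obtain ⟨δ, hδ, hxδ⟩ := Metric.uniformContinuous_iff.1
    (CompactSpace.uniformContinuous_of_continuous hx) η hη
  refine ⟨δ, hδ, fun s t hstδ => ?_⟩
  have hdiam : Metric.diam (x '' Icc s t) ≤ η := by
    refine Metric.diam_le_of_forall_dist_le hη.le ?_
    rintro _ ⟨u, hu, rfl⟩ _ ⟨v, hv, rfl⟩
    exact (hxδ ((Real.dist_le_of_mem_Icc hu hv).trans_lt hstδ)).le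
  calc Metric.diam (x '' Icc s t) ^ r * (V t - V s)
      ≤ Metric.diam (x '' Icc s t) ^ r * (V ⊤ - V ⊥) :=
        mul_le_mul_of_nonneg_left (sub_le_sub (hV le_top) (hV bot_le))
          (Real.rpow_nonneg Metric.diam_nonneg _)
    _ = (V ⊤ - V ⊥) * Metric.diam (x '' Icc s t) ^ r := mul_comm ..
    _ ≤ ε := (hηε _ Metric.diam_nonneg hdiam).le

theorem rsIntegral_of_abs_mul_sub_le {ω : Icc a b → Icc a b → ℝ} (hω : IsControl ω)
    (hωsmall : ∀ ε > 0, ∃ δ > 0, ∀ ⦃s t : Icc a b⦄, s ≤ t → (t : ℝ) - s < δ → ω s t ≤ ε)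
    {h x y : ℝ → ℝ} {A θ : ℝ} (hA : 0 ≤ A) (hθ : 1 < θ)
    (hloc : ∀ ⦃s v t : Icc a b⦄, s ≤ v → v ≤ t →
      |h v * (x t - x s) - (y t - y s)| ≤ A * ω s t ^ θ) {t : ℝ} (ht : t ∈ Icc a b) :
    RSIntegral h x a t (y t - y a) := by
  intro ε hε
  obtain ⟨ρ, hρ, hρε⟩ := exists_pos_forall_mul_rpow_lt (A * ω ⊥ ⊤) (sub_pos.2 hθ) hε
  obtain ⟨δ, hδ, hωδ⟩ := hωsmall ρ hρ
  refine ⟨δ, hδ, fun n τ ξ hτ hτ₀ hτₙ hξ hmesh => ?_⟩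
  have hτmem (i : Fin (n + 1)) : τ i ∈ Icc a b :=
    ⟨hτ₀.symm.trans_le (hτ.monotone (Fin.zero_le i)),
      (hτ.monotone (Fin.le_last i)).trans (hτₙ.trans_le ht.2)⟩
  let σ (i : Fin (n + 1)) : Icc a b := ⟨τ i, hτmem i⟩
  have hσ : Monotone σ := hτ.monotone
  have hcell (i : Fin n) : σ i.castSucc ≤ σ i.succ := hσ i.castSucc_lt_succ.le
  have hsum := hω.norm_sum_sub_le hA hθ.le hσ (fun s => y s)
    (fun i => h (ξ i) * (x (τ i.succ) - x (τ i.castSucc)))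
    (fun i => hloc (s := σ i.castSucc) (t := σ i.succ)
      (v := ⟨ξ i, (hτmem _).1.trans (hξ i).1, (hξ i).2.trans (hτmem _).2⟩) (hξ i).1 (hξ i).2)
    hρ.le fun i => hωδ (hcell i) (hmesh i)
  calc |∑ i, h (ξ i) * (x (τ i.succ) - x (τ i.castSucc)) - (y t - y a)|
      ≤ A * ρ ^ (θ - 1) * ω ⊥ ⊤ := by simpa only [σ, hτ₀, hτₙ, Real.norm_eq_abs] using hsum
    _ = A * ω ⊥ ⊤ * ρ ^ (θ - 1) := by ring
    _ < ε := hρε ρ hρ.le le_rfl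

theorem exists_rsIntegral_eq_of_control {ω : Icc a b → Icc a b → ℝ} (hω : IsControl ω)
    (hωsmall : ∀ ε > 0, ∃ δ > 0, ∀ ⦃s t : Icc a b⦄, s ≤ t → (t : ℝ) - s < δ → ω s t ≤ ε)
    {x F : ℝ → ℝ} {K α : ℝ≥0} {γ : ℝ}
    (hx : ∀ ⦃s t : Icc a b⦄, s ≤ t → |x t - x s| ≤ ω s t ^ γ) (hF : HolderWith K α F)
    (hα₀ : 0 < α) (hα : α ≤ 1) (hγ : 0 < γ) (hθ : 1 < (1 + α) * γ) (y₀ : ℝ) :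
    ∃ y : ℝ → ℝ, (∃ M G : ℝ, 0 ≤ M ∧ 0 ≤ G ∧ ∀ ⦃s t : Icc a b⦄, s ≤ t →
        |y t - y s| ≤ M * ω s t ^ ((1 + α) * γ) + G * |x t - x s|) ∧
      ∀ t ∈ Icc a b, RSIntegral (fun s => F (y s)) x a t (y t - y₀) := by
  have hab : a ≤ b := Fact.out
  obtain ⟨M, hM, y, hy₀, hy⟩ :=
    exists_isDavieSolution (x := fun t : Icc a b => x t) hω hx hF hα₀ hα hγ hθ y₀
  obtain ⟨G, hG, hyG⟩ := hy.exists_norm_sub_le hω hx hF hγ.le (zero_le_one.trans hθ.le) hM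
  obtain ⟨A, hA, hyA⟩ := hy.exists_norm_smul_sub_le hω hx hF hγ hM
  have hya : IccExtend hab y a = y₀ := (IccExtend_left hab y).trans hy₀
  refine ⟨IccExtend hab y, ⟨M, G, hM, hG, fun s t hst => ?_⟩, fun t ht => ?_⟩
  · simpa only [IccExtend_val, Real.norm_eq_abs] using hyG hst
  · refine hya ▸ rsIntegral_of_abs_mul_sub_le hω hωsmall hA hθ (fun s v t hsv hvt => ?_) ht
    simpa only [IccExtend_val, smul_eq_mul, mul_comm, Real.norm_eq_abs] using hyA hsv hvt

theorem pVar_lt_top_of_abs_sub_le_control {x y V : ℝ → ℝ} {ω : Icc a b → Icc a b → ℝ}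
    {p θ c M G : ℝ} (hp : 0 < p) (hθ : 1 / p ≤ θ) (hω : IsControl ω) (hc : 0 ≤ c)
    (hωV : ∀ ⦃s t : Icc a b⦄, s ≤ t → ω s t ≤ c * (V t - V s))
    (hV : ∀ s ∈ Icc a b, ∀ t ∈ Icc a b, s ≤ t → |x t - x s| ^ p ≤ V t - V s)
    (hM : 0 ≤ M) (hG : 0 ≤ G)
    (hy : ∀ ⦃s t : Icc a b⦄, s ≤ t → |y t - y s| ≤ M * ω s t ^ θ + G * |x t - x s|) :
    pVar y p a b < ⊤ := by
  have hp' : 0 < 1 / p := one_div_pos.2 hp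
  have hω₀ : 0 ≤ ω ⊥ ⊤ := hω.nonneg bot_le
  refine pVar_lt_top_of_abs_sub_le hp (monotoneOn_of_abs_sub_rpow_le hV)
    (A := M * ω ⊥ ⊤ ^ (θ - 1 / p) * c ^ (1 / p) + G) (by positivity) fun s hs t ht hst => ?_
  have hVst : 0 ≤ V t - V s := (hV s hs t ht hst).trans' (by positivity)
  have hωst : ω ⟨s, hs⟩ ⟨t, ht⟩ ^ (1 / p) ≤ (c * (V t - V s)) ^ (1 / p) :=
    Real.rpow_le_rpow (hω.nonneg hst) (hωV hst) hp'.le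
  have hxst : |x t - x s| ≤ (V t - V s) ^ (1 / p) := by
    rw [one_div, Real.le_rpow_inv_iff_of_pos (abs_nonneg _) hVst hp]
    exact hV s hs t ht hst
  calc |y t - y s| ≤ M * ω ⟨s, hs⟩ ⟨t, ht⟩ ^ θ + G * |x t - x s| :=
        hy (s := ⟨s, hs⟩) (t := ⟨t, ht⟩) hst
    _ ≤ M * (ω ⊥ ⊤ ^ (θ - 1 / p) * (c * (V t - V s)) ^ (1 / p)) +
          G * (V t - V s) ^ (1 / p) := by
        gcongr
        exact (rpow_le_rpow_sub_mul_rpow (hω.nonneg hst) (hω.le_bot_top hst) hp'.le hθ).trans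
          (by gcongr)
    _ = (M * ω ⊥ ⊤ ^ (θ - 1 / p) * c ^ (1 / p) + G) * (V t - V s) ^ (1 / p) := by
        rw [Real.mul_rpow hc hVst]
        ring

end Interval

theorem integral_equation_solution_alpha_lipschitz_general {p : ℝ} (hp : 0 < p) {a b : ℝ}
    (hab : a ≤ b) (y₀ : ℝ) {x : ℝ → ℝ} (hxc : ContinuousOn x (Icc a b)) (hx : pVar x p a b < ⊤)
    {α K : ℝ≥0} (hα₀ : 0 < α) (hα : α ≤ 1) (hpα : p < 1 + α) {F : ℝ → ℝ} (hF : HolderWith K α F) :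
    ∃ y : ℝ → ℝ, pVar y p a b < ⊤ ∧
      ∀ t ∈ Icc a b, RSIntegral (fun s => F (y s)) x a t (y t - y₀) := by
  have : Fact (a ≤ b) := ⟨hab⟩
  obtain ⟨V, hV⟩ := (pVar_lt_top_iff hp).1 hx
  have hVmono : Monotone fun t : Icc a b => V t := fun s t hst =>
    monotoneOn_of_abs_sub_rpow_le hV s.2 t.2 hst
  obtain ⟨q, hpq, hq⟩ := exists_between
    (lt_min hpα (lt_mul_of_one_lt_right hp (by simpa using hα₀) : p < p * (1 + α)))
  obtain ⟨hqα, hqp⟩ := lt_min_iff.1 hq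
  have hq₀ : 0 < q := hp.trans hpq
  have hr : 0 < q - p := sub_pos.2 hpq
  have hxι : Continuous fun t : Icc a b => x t := hxc.domRestrict
  have hxb : Bornology.IsBounded (range fun t : Icc a b => x t) := (isCompact_range hxι).isBounded
  have hω := isControl_oscControl hxb hVmono hr.le
  have hωsmall (ε : ℝ) (hε : 0 < ε) := exists_pos_forall_oscControl_le hxι hVmono hr hε
  have hxω ⦃s t : Icc a b⦄ (hst : s ≤ t) :=
    abs_sub_le_oscControl_rpow (V := fun t : Icc a b => V t) hxb hp hpq.le (hV s s.2 t t.2 hst) hst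
  obtain ⟨y, ⟨M, G, hM, hG, hyG⟩, hy⟩ := exists_rsIntegral_eq_of_control hω
    (fun ε hε => (hωsmall ε hε).imp fun _ h => ⟨h.1, fun _ _ _ => @h.2 _ _⟩) hxω hF hα₀ hα
    (one_div_pos.2 hq₀) (by rwa [mul_one_div, one_lt_div hq₀]) y₀
  refine ⟨y, pVar_lt_top_of_abs_sub_le_control hp ?_ hω (by positivity)
    (fun s t hst => oscControl_le hxb hVmono hr.le hst) hV hM hG hyG, hy⟩
  rw [mul_one_div, div_le_div_iff₀ hp hq₀]
  linarith

/-- Proposition 1: existence of a solution of finite `p`-variation to the integral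
equation `y(t) = y₀ + ∫_a^t F(y(s)) dx(s)` driven by a continuous signal of finite
`p`-variation, for a globally `α`-Lipschitz `F` with `p − 1 < α < 1`. -/
theorem integral_equation_solution_alpha_lipschitz
    (p : ℝ) (hp : 1 < p) (hp2 : p < 2) (a b : ℝ) (hab : a < b) (y₀ : ℝ)
    (x : ℝ → ℝ) (hxc : ContinuousOn x (Set.Icc a b)) (hx : pVar x p a b < ⊤)
    (α : ℝ) (hα1 : p - 1 < α) (hα2 : α < 1)
    (F : ℝ → ℝ) (K : ℝ) (hK : 0 ≤ K)
    (hF : ∀ u v : ℝ, |F u - F v| ≤ K * |u - v| ^ α) :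
    ∃ y : ℝ → ℝ, pVar y p a b < ⊤ ∧
      ∀ t ∈ Set.Icc a b, RSIntegral (fun s => F (y s)) x a t (y t - y₀) := by
  lift K to ℝ≥0 using hK
  lift α to ℝ≥0 using by linarith
  exact integral_equation_solution_alpha_lipschitz_general (by linarith) hab.le y₀ hxc hx
    (NNReal.coe_pos.1 (by linarith)) hα2.le (by linarith) (holderWith_of_dist_le hF)
end
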